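/- arXiv:math/9904123 — 3 statements merged into one kernel-verified Lean document; each statement's English description precedes it below -/
import Mathlib

section
/- Let γ : ℝ → ℝ³ be a simple closed spherical curve of length L, parametrized by arclength, with curvature κ(s) = ‖γ''(s)‖. If there exists a nonzero smooth L-periodic function f : ℝ → ℝ with ∫₀^L (4 f'(s)² + κ(s)² f(s)²) ds = (4π²/L²) ∫₀^L f(s)² ds (i.e., equality holds in the lower bound 4π²/L² ≤ μ₁(−4 d²/ds² + κ²)), then the curvature κ is constant. -/
open Real MeasureTheory

/-- Comparison of spherical distance and length. -/
lemma cmp_cos {E : Type*} [NormedAddCommGroup E] [InnerProductSpace ℝ E]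
    (T T' : ℝ → E) (A κ : ℝ → ℝ)
    (hT : ∀ s, HasDerivAt T (T' s) s) (hu : ∀ s, ‖T s‖ = 1)
    (hA : ∀ s, HasDerivAt A (κ s) s) (hκ : ∀ s, ‖T' s‖ = κ s) (hpos : ∀ s, 0 < κ s)
    (a b : ℝ) (hab : a ≤ b) (hπ : A b - A a ≤ π) :
    cos (A b - A a) ≤ inner ℝ (T a) (T b) := by
  have hmono : StrictMono A := strictMono_of_deriv_pos (fun s => by rw [(hA s).deriv]; exact hpos s)
  rcases hπ.eq_or_lt with h | h
  · rw [h, cos_pi]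
    have := abs_real_inner_le_norm (T a) (T b)
    rw [hu, hu] at this
    have := (abs_le.1 this).1
    linarith
  have horth : ∀ s, inner ℝ (T s) (T' s) = (0:ℝ) := by
    intro s
    have h1 := (hT s).inner ℝ (hT s)
    have h2 : (fun t => inner ℝ (T t) (T t)) = fun _ => (1:ℝ) := by
      funext t; rw [real_inner_self_eq_norm_sq, hu]; norm_num
    rw [h2] at h1
    have h3 := h1.unique (hasDerivAt_const s (1:ℝ))
    rw [real_inner_comm (T s) (T' s)] at h3
    linarith
  have key : ∀ s, - inner ℝ (T a) (T' s) ≤ κ s * √(1 - (inner ℝ (T a) (T s))^2) := by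
    intro s
    set u : ℝ := inner ℝ (T a) (T s) with hu'
    have h1 : inner ℝ (T a) (T' s) = inner ℝ (T a - u • T s) (T' s) := by
      rw [inner_sub_left, inner_smul_left, horth]; simp
    have h2 : ‖T a - u • T s‖ = √(1 - u^2) := by
      rw [eq_comm, ← sqrt_sq (norm_nonneg (T a - u • T s)), ← real_inner_self_eq_norm_sq]
      congr 1
      have n1 : ∀ x, inner ℝ (T x) (T x) = (1:ℝ) := fun x => by
        rw [real_inner_self_eq_norm_sq, hu]; norm_num
      simp only [inner_sub_left, inner_sub_right, real_inner_smul_left, real_inner_smul_right, n1]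
      rw [real_inner_comm (T a) (T s), ← hu']
      ring
    have h3 := abs_real_inner_le_norm (T a - u • T s) (T' s)
    rw [h1, ← h2, ← hκ]
    have := (abs_le.1 h3).1
    nlinarith
  have main : ∀ ε > 0, ε + (1 + ε) * (A b - A a) < π →
      cos (ε + (1 + ε) * (A b - A a)) ≤ inner ℝ (T a) (T b) := by
    intro ε hε hlt
    have hB : ∀ s, HasDerivAt (fun s => - cos (ε + (1 + ε) * (A s - A a)))
        (sin (ε + (1 + ε) * (A s - A a)) * ((1 + ε) * κ s)) s := by
      intro s
      have := ((((hA s).sub_const (A a)).const_mul (1+ε)).const_add ε).cos.neg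
      exact this.congr_deriv (by ring)
    have hF : ∀ s, HasDerivAt (fun s => - inner ℝ (T a) (T s)) (- inner ℝ (T a) (T' s)) s := by
      intro s
      have := ((hasDerivAt_const s (T a)).inner ℝ (hT s)).neg
      exact this.congr_deriv (by simp)
    have := image_le_of_deriv_right_lt_deriv_boundary' (a := a) (b := b)
      (f := fun s => - inner ℝ (T a) (T s)) (f' := fun s => - inner ℝ (T a) (T' s))
      (B := fun s => - cos (ε + (1 + ε) * (A s - A a)))
      (B' := fun s => sin (ε + (1 + ε) * (A s - A a)) * ((1 + ε) * κ s))
      (fun s _ => (hF s).continuousAt.continuousWithinAt)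
      (fun s _ => (hF s).hasDerivWithinAt)
      (by
        simp only [sub_self, mul_zero, add_zero, real_inner_self_eq_norm_sq, hu]
        have := cos_le_one ε
        linarith)
      (fun s _ => (hB s).continuousAt.continuousWithinAt)
      (fun s _ => (hB s).hasDerivWithinAt)
      (by
        intro s hs he
        have h1 : A a ≤ A s := hmono.monotone hs.1
        have h2 : A s ≤ A b := hmono.monotone hs.2.le
        have h3 : 0 < ε + (1 + ε) * (A s - A a) := by nlinarith
        have h4 : ε + (1 + ε) * (A s - A a) < π := by nlinarith
        have hsin := sin_pos_of_pos_of_lt_pi h3 h4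
        have he' : inner ℝ (T a) (T s) = cos (ε + (1 + ε) * (A s - A a)) := by
          simpa using he
        have hk := key s
        rw [he', ← sin_sq, sqrt_sq hsin.le] at hk
        have : 0 < ε * (κ s * sin (ε + (1 + ε) * (A s - A a))) := by
          have := hpos s
          positivity
        linarith)
      (Set.right_mem_Icc.2 hab)
    simpa using this
  have hcont : Filter.Tendsto (fun ε : ℝ => ε + (1 + ε) * (A b - A a)) (nhdsWithin 0 (Set.Ioi 0))
      (nhds (A b - A a)) := by
    have : Continuous (fun ε : ℝ => ε + (1 + ε) * (A b - A a)) := by fun_prop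
    have := (this.tendsto 0).mono_left (nhdsWithin_le_nhds (s := Set.Ioi 0))
    simpa using this
  refine le_of_tendsto ((continuous_cos.tendsto _).comp hcont) ?_
  filter_upwards [hcont.eventually (gt_mem_nhds h), self_mem_nhdsWithin] with ε h1 h2
  exact main ε h2 h1

/-- Wirtinger inequality for antiperiodic functions. -/
lemma wirt (L : ℝ) (hL : 0 < L) (u u' : ℝ → ℝ) (hu : ∀ s, HasDerivAt u (u' s) s)
    (hc : Continuous u') (hanti : ∀ s, u (s + L) = - u s) :
    (π / L)^2 * ∫ s in (0:ℝ)..L, (u s)^2 ≤ ∫ s in (0:ℝ)..L, (u' s)^2 := by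
  have huc : Continuous u := continuous_iff_continuousAt.2 fun s => (hu s).continuousAt
  have hanti' : ∀ s, u' (s + L) = - u' s := by
    intro s
    have h1 : HasDerivAt (fun t => u (t + L)) (u' (s + L)) s := (hu (s+L)).comp_add_const s L
    have h2 : HasDerivAt (fun t => u (t + L)) (- u' s) s := by
      simp only [hanti]; exact (hu s).neg
    exact h1.unique h2
  obtain ⟨c, hc0⟩ : ∃ c, u c = 0 := by
    have h0 := hanti 0
    rw [zero_add] at h0
    rcases le_total (u 0) 0 with h | h
    · exact mem_range_of_exists_le_of_exists_ge huc ⟨0, h⟩ ⟨L, by linarith⟩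
    · exact mem_range_of_exists_le_of_exists_ge huc ⟨L, by linarith⟩ ⟨0, h⟩
  have p1 : Function.Periodic (fun s => (u s)^2) L := fun s => by simp only [hanti]; ring
  have p2 : Function.Periodic (fun s => (u' s)^2) L := fun s => by simp only [hanti']; ring
  have e1 := p1.intervalIntegral_add_eq 0 c
  have e2 := p2.intervalIntegral_add_eq 0 c
  rw [zero_add] at e1 e2
  rw [e1, e2]
  have main : ∀ η, 0 < η → η < π / L →
      η^2 * ∫ s in c..(c+L), (u s)^2 ≤ ∫ s in c..(c+L), (u' s)^2 := by
    intro η h0 h1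
    have h1' : η * L < π := (lt_div_iff₀ hL).1 h1
    set m := c + L / 2 with hm
    have hcos : ∀ s ∈ Set.uIcc c (c+L), 0 < cos (η * (s - m)) := by
      intro s hs
      rw [Set.uIcc_of_le (by linarith)] at hs
      apply cos_pos_of_mem_Ioo
      constructor <;> nlinarith [hs.1, hs.2]
    have hd : ∀ s ∈ Set.uIcc c (c+L), HasDerivAt (fun s => η * tan (η * (s - m)) * (u s)^2)
        (η * (1 / cos (η * (s - m))^2 * η) * (u s)^2
          + η * tan (η * (s - m)) * (2 * u s * u' s)) s := by
      intro s hs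
      have t1 : HasDerivAt (fun s => η * (s - m)) η s := by
        simpa using ((hasDerivAt_id s).sub_const m).const_mul η
      have t2 := (((hasDerivAt_tan (hcos s hs).ne').comp s t1).const_mul η).mul ((hu s).pow 2)
      exact t2.congr_deriv (by simp)
    have hcc : ContinuousOn (fun s => η * (1 / cos (η * (s - m))^2 * η) * (u s)^2
          + η * tan (η * (s - m)) * (2 * u s * u' s)) (Set.uIcc c (c+L)) := by
      have ht : ContinuousOn (fun s => tan (η * (s - m))) (Set.uIcc c (c+L)) := by
        simp only [tan_eq_sin_div_cos]
        apply ContinuousOn.div (by fun_prop) (by fun_prop)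
        intro s hs; exact (hcos s hs).ne'
      have ht2 : ContinuousOn (fun s => 1 / cos (η * (s - m))^2) (Set.uIcc c (c+L)) := by
        apply ContinuousOn.div (by fun_prop) (by fun_prop)
        intro s hs; exact pow_ne_zero _ (hcos s hs).ne'
      fun_prop
    have hi := intervalIntegral.integral_eq_sub_of_hasDerivAt hd hcc.intervalIntegrable
    simp only [hanti, hc0] at hi
    have i1 : IntervalIntegrable (fun s => (u' s)^2) volume c (c+L) :=
      (hc.pow 2).intervalIntegrable _ _
    have i2 : IntervalIntegrable (fun s => η^2 * (u s)^2) volume c (c+L) :=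
      (continuous_const.mul (huc.pow 2)).intervalIntegrable _ _
    have hnn : 0 ≤ ∫ s in c..(c+L), ((u' s)^2 - η^2 * (u s)^2 +
        (η * (1 / cos (η * (s - m))^2 * η) * (u s)^2
          + η * tan (η * (s - m)) * (2 * u s * u' s))) := by
      apply intervalIntegral.integral_nonneg (by linarith)
      intro s hs
      have hp := hcos s (by rwa [Set.uIcc_of_le (by linarith)])
      have : (u' s)^2 - η^2 * (u s)^2 +
        (η * (1 / cos (η * (s - m))^2 * η) * (u s)^2
          + η * tan (η * (s - m)) * (2 * u s * u' s)) = (u' s + η * tan (η * (s - m)) * u s)^2 := by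
        rw [tan_eq_sin_div_cos]
        have := sin_sq (η * (s - m))
        field_simp
        rw [add_sq, mul_pow, mul_pow, this]
        ring
      rw [this]
      positivity
    rw [intervalIntegral.integral_add (i1.sub i2) hcc.intervalIntegrable, hi,
      intervalIntegral.integral_sub i1 i2, intervalIntegral.integral_const_mul] at hnn
    linarith
  have hω : 0 < π / L := by positivity
  have ht : Filter.Tendsto (fun η : ℝ => η^2 * ∫ s in c..(c+L), (u s)^2)
      (nhdsWithin (π / L) (Set.Iio (π / L))) (nhds ((π / L)^2 * ∫ s in c..(c+L), (u s)^2)) := by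
    have : Continuous (fun η : ℝ => η^2 * ∫ s in c..(c+L), (u s)^2) := by fun_prop
    exact (this.tendsto _).mono_left nhdsWithin_le_nhds
  refine le_of_tendsto ht ?_
  filter_upwards [mem_nhdsWithin_of_mem_nhds (lt_mem_nhds hω), self_mem_nhdsWithin] with η h1 h2
  exact main η h1 h2

/-- Total curvature is at most `2π` in the equality case. -/
lemma total_le (L : ℝ) (hL : 0 < L) (f f' A κ : ℝ → ℝ) (K : ℝ)
    (hf : ∀ s, HasDerivAt f (f' s) s) (hfc : Continuous f')
    (hA : ∀ s, HasDerivAt A (κ s) s) (hκ : Continuous κ) (hpos : ∀ s, 0 < κ s)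
    (hfp : ∀ s, f (s + L) = f s) (hAp : ∀ s, A (s + L) = A s + K) (hK : 0 < K)
    (hne : ∃ s, f s ≠ 0)
    (heq : (∫ s in (0:ℝ)..L, (4 * (f' s)^2 + (κ s)^2 * (f s)^2))
      = (4 * π^2 / L^2) * ∫ s in (0:ℝ)..L, (f s)^2) : K ≤ 2 * π := by
  have cf : Continuous f := continuous_iff_continuousAt.2 fun s => (hf s).continuousAt
  have cA : Continuous A := continuous_iff_continuousAt.2 fun s => (hA s).continuousAt
  have hφ : ∀ s, HasDerivAt (fun s => π / K * A s) (π / K * κ s) s :=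
    fun s => (hA s).const_mul _
  have hφp : ∀ s, π / K * A (s + L) = π / K * A s + π := by
    intro s; rw [hAp]; field_simp
  have w1 := wirt L hL (fun s => f s * cos (π / K * A s))
    (fun s => f' s * cos (π / K * A s) + f s * (- sin (π / K * A s) * (π / K * κ s)))
    (fun s => (hf s).mul (hφ s).cos) (by fun_prop)
    (fun s => by simp only [hfp, hφp, cos_add_pi]; ring)
  have w2 := wirt L hL (fun s => f s * sin (π / K * A s))
    (fun s => f' s * sin (π / K * A s) + f s * (cos (π / K * A s) * (π / K * κ s)))
    (fun s => (hf s).mul (hφ s).sin) (by fun_prop)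
    (fun s => by simp only [hfp, hφp, sin_add_pi]; ring)
  have w := add_le_add w1 w2
  rw [← mul_add, ← intervalIntegral.integral_add, ← intervalIntegral.integral_add] at w
  rotate_left
  iterate 4 exact Continuous.intervalIntegrable (by fun_prop) _ _
  have s1 : ∀ s, (f s * cos (π / K * A s))^2 + (f s * sin (π / K * A s))^2 = (f s)^2 := by
    intro s
    linear_combination (f s)^2 * sin_sq_add_cos_sq (π / K * A s)
  have s2 : ∀ s, (f' s * cos (π / K * A s) + f s * (- sin (π / K * A s) * (π / K * κ s)))^2
      + (f' s * sin (π / K * A s) + f s * (cos (π / K * A s) * (π / K * κ s)))^2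
      = (f' s)^2 + (π / K)^2 * ((κ s)^2 * (f s)^2) := by
    intro s
    linear_combination ((f' s)^2 + (π / K)^2 * ((κ s)^2 * (f s)^2)) *
      sin_sq_add_cos_sq (π / K * A s)
  simp only [s1, s2] at w
  have i1 : IntervalIntegrable (fun s => (f' s)^2) volume 0 L :=
    Continuous.intervalIntegrable (by fun_prop) _ _
  have i2 : IntervalIntegrable (fun s => (κ s)^2 * (f s)^2) volume 0 L :=
    Continuous.intervalIntegrable (by fun_prop) _ _
  rw [intervalIntegral.integral_add i1 (i2.const_mul _), intervalIntegral.integral_const_mul] at w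
  rw [intervalIntegral.integral_add (i1.const_mul _) i2, intervalIntegral.integral_const_mul] at heq
  have hJ : 0 < ∫ s in (0:ℝ)..L, (κ s)^2 * (f s)^2 := by
    obtain ⟨s, hs⟩ := hne
    obtain ⟨y, hy, hys⟩ := Function.Periodic.exists_mem_Ico₀ (f := f) hfp hL s
    apply intervalIntegral.integral_pos hL (by fun_prop)
    · intro x _; positivity
    · refine ⟨y, ⟨hy.1, hy.2.le⟩, ?_⟩
      rw [hys] at hs
      have := hpos y
      positivity
  by_contra! hlt
  have h1 : π / K < 1 / 2 := by
    rw [div_lt_div_iff₀ hK (by norm_num)]; linarith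
  have h2 : 0 < π / K := by positivity
  have h3 : (π / K)^2 < 1 / 4 := by nlinarith
  have h4 : 4 * ((π / L)^2 * ∫ s in (0:ℝ)..L, (f s)^2)
     = (4 * π^2 / L^2) * ∫ s in (0:ℝ)..L, (f s)^2 := by ring
  nlinarith

/-- Equality case of Fenchel's theorem. -/
lemma fenchel_eq {E : Type*} [NormedAddCommGroup E] [InnerProductSpace ℝ E]
    (L : ℝ) (hL : 0 < L) (K : ℝ)
    (g T T' : ℝ → E) (A κ : ℝ → ℝ) (hg : ∀ s, HasDerivAt g (T s) s)
    (hT : ∀ s, HasDerivAt T (T' s) s) (hu : ∀ s, ‖T s‖ = 1)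
    (hA : ∀ s, HasDerivAt A (κ s) s) (hκ : ∀ s, ‖T' s‖ = κ s) (hpos : ∀ s, 0 < κ s)
    (hgp : ∀ s, g (s + L) = g s) (hTp : ∀ s, T (s + L) = T s)
    (hAp : ∀ s, A (s + L) = A s + K) (hK0 : 0 < K) (hK : K ≤ 2 * π)
    : K = 2 * π ∧ ∀ a b, a ≤ b → A b - A a ≤ π → inner ℝ (T a) (T b) = cos (A b - A a) := by
  have hmono : StrictMono A := strictMono_of_deriv_pos (fun s => by rw [(hA s).deriv]; exact hpos s)
  have cA : Continuous A := continuous_iff_continuousAt.2 fun s => (hA s).continuousAt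
  have cT : Continuous T := continuous_iff_continuousAt.2 fun s => (hT s).continuousAt
  have cmp := cmp_cos T T' A κ hT hu hA hκ hpos
  have hcs : ∀ x y, 0 ≤ x → 0 ≤ y → x + y = K / 2 → 0 ≤ cos x + cos y := by
    intro x y hx hy hxy
    have := cos_le_cos_of_nonneg_of_le_pi hy (y := π - x) (by linarith) (by linarith)
    rw [cos_pi_sub] at this
    linarith
  have main : ∀ a, ∃ m, a ≤ m ∧ A m = A a + K / 2 ∧
      ∀ s, a ≤ s → s ≤ m → inner ℝ (T a) (T s) = cos (A s - A a) ∧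
        cos (A s - A a) + cos (A m - A s) = 0 := by
    intro a
    obtain ⟨m, hm, hmA⟩ := intermediate_value_Icc (show a ≤ a + L by linarith) cA.continuousOn
      (show A a + K / 2 ∈ Set.Icc (A a) (A (a + L)) by
        rw [hAp]; constructor <;> linarith)
    have hnn1 : ∀ s, a ≤ s → s ≤ m →
        cos (A s - A a) ≤ inner ℝ (T a) (T s) ∧ cos (A m - A s) ≤ inner ℝ (T m) (T s) ∧
        0 ≤ cos (A s - A a) + cos (A m - A s) := by
      intro s h1 h2
      have m1 := hmono.monotone h1
      have m2 := hmono.monotone h2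
      refine ⟨cmp a s h1 (by linarith), ?_, hcs _ _ (by linarith) (by linarith) (by linarith)⟩
      rw [real_inner_comm]
      exact cmp s m h2 (by linarith)
    have hnn : ∀ s ∈ Set.Icc a (a + L), 0 ≤ inner ℝ (T a + T m) (T s) := by
      intro s hs
      rw [inner_add_left]
      rcases le_total s m with h | h
      · obtain ⟨h1, h2, h3⟩ := hnn1 s hs.1 h
        linarith
      · have m1 := hmono.monotone h
        have m2 := hmono.monotone hs.2
        have q := hAp a
        have h1 := cmp m s h (by linarith)
        have h2 := cmp s (a + L) hs.2 (by linarith)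
        rw [hTp, real_inner_comm] at h2
        have := hcs (A s - A m) (A (a + L) - A s) (by linarith) (by linarith) (by linarith)
        linarith
    have hint : ∫ s in a..(a+L), inner ℝ (T a + T m) (T s) = 0 := by
      have := intervalIntegral.integral_eq_sub_of_hasDerivAt (a := a) (b := a + L)
        (f := fun s => inner ℝ (T a + T m) (g s)) (f' := fun s => inner ℝ (T a + T m) (T s))
        (fun s _ => by simpa using (hasDerivAt_const s (T a + T m)).inner ℝ (hg s))
        (Continuous.intervalIntegrable (by fun_prop) _ _)
      rw [this, hgp, sub_self]
    have hz : ∀ s ∈ Set.Icc a (a + L), inner ℝ (T a + T m) (T s) = 0 := by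
      intro s hs
      by_contra hne
      have := intervalIntegral.integral_pos (a := a) (b := a + L)
        (f := fun s => inner ℝ (T a + T m) (T s)) (by linarith)
        (Continuous.continuousOn (by fun_prop))
        (fun x hx => hnn x ⟨hx.1.le, hx.2⟩) ⟨s, hs, lt_of_le_of_ne (hnn s hs) (Ne.symm hne)⟩
      linarith
    refine ⟨m, hm.1, hmA, fun s h1 h2 => ?_⟩
    obtain ⟨q1, q2, q3⟩ := hnn1 s h1 h2
    have q4 := hz s ⟨h1, h2.trans hm.2⟩
    rw [inner_add_left] at q4
    constructor <;> linarith
  have hKe : K = 2 * π := by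
    obtain ⟨m, h1, h2, h3⟩ := main 0
    have := (h3 0 le_rfl h1).2
    rw [sub_self, cos_zero, h2, add_sub_cancel_left] at this
    have := injOn_cos (x₁ := K / 2) (x₂ := π) ⟨by linarith, by linarith⟩ ⟨pi_pos.le, le_rfl⟩
      (by rw [cos_pi]; linarith)
    linarith
  refine ⟨hKe, fun a b hab hb => ?_⟩
  obtain ⟨m, h1, h2, h3⟩ := main a
  refine (h3 b hab ?_).1
  exact hmono.le_iff_le.1 (by linarith)

lemma planar_const {E : Type*} [NormedAddCommGroup E] [InnerProductSpace ℝ E]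
    (g T T' : ℝ → E) (A κ : ℝ → ℝ) (hg : ∀ s, HasDerivAt g (T s) s)
    (hT : ∀ s, HasDerivAt T (T' s) s) (hu : ∀ s, ‖T s‖ = 1)
    (hA : ∀ s, HasDerivAt A (κ s) s) (hpos : ∀ s, 0 < κ s)
    (hgT : ∀ s, inner ℝ (g s) (T s) = (0:ℝ)) (hgT' : ∀ s, inner ℝ (g s) (T' s) = (-1:ℝ))
    (hsurj : Function.Surjective A)
    (h : ∀ a b, a ≤ b → A b - A a ≤ π → inner ℝ (T a) (T b) = cos (A b - A a)) :
    ∀ s₁ s₂, κ s₁ = κ s₂ := by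
  have hmono : StrictMono A := strictMono_of_deriv_pos (fun s => by rw [(hA s).deriv]; exact hpos s)
  have hpi := pi_pos
  have key : ∀ s, HasDerivAt κ 0 s := by
    intro s
    obtain ⟨t, ht⟩ := hsurj (A s - π / 4)
    obtain ⟨m, hm⟩ := hsurj (A s + π / 4)
    have hts : t < s := hmono.lt_iff_lt.1 (by linarith)
    have hsm : s < m := hmono.lt_iff_lt.1 (by linarith)
    have hTe : ∀ r ∈ Set.Ioo t m, T r = cos (A r - A t) • T t + sin (A r - A t) • T m := by
      intro r hr
      have m1 := hmono hr.1
      have m2 := hmono hr.2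
      have e1 := h t r hr.1.le (by linarith)
      have e2 := h r m hr.2.le (by linarith)
      have e3 := h t m (hts.trans hsm).le (by linarith)
      have : A m - A r = π / 2 - (A r - A t) := by linarith
      rw [this, cos_pi_div_two_sub] at e2
      have : A m - A t = π / 2 := by linarith
      rw [this, cos_pi_div_two] at e3
      rw [← sub_eq_zero, ← norm_eq_zero, ← sq_eq_zero_iff, ← real_inner_self_eq_norm_sq]
      have n1 : ∀ x, inner ℝ (T x) (T x) = (1:ℝ) := fun x => by
        rw [real_inner_self_eq_norm_sq, hu]; norm_num
      simp only [inner_sub_left, inner_sub_right, inner_add_left, inner_add_right,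
        real_inner_smul_left, real_inner_smul_right, n1, real_inner_comm (T t) (T m),
        real_inner_comm (T t) (T r), real_inner_comm (T m) (T r), e1, e2, e3]
      simp only [real_inner_comm (T r) (T t), real_inner_comm (T m) (T t),
        real_inner_comm (T r) (T m), e1, e2, e3]
      linear_combination - sin_sq_add_cos_sq (A r - A t)
    have hnb : ∀ r ∈ Set.Ioo t m, Set.Ioo t m ∈ nhds r := fun r hr => Ioo_mem_nhds hr.1 hr.2
    set e : ℝ → E := fun r => (- sin (A r - A t)) • T t + cos (A r - A t) • T m with he
    have hT'e : ∀ r ∈ Set.Ioo t m, T' r = κ r • e r := by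
      intro r hr
      have d := (hA r).sub_const (A t)
      have d1 := (d.cos.smul_const (T t)).add (d.sin.smul_const (T m))
      have d2 := d1.congr_of_eventuallyEq (f₁ := T)
        (Filter.eventually_of_mem (hnb r hr) (fun x hx => hTe x hx))
      rw [(hT r).unique d2, he]
      module
    have hψ : HasDerivAt (fun r => inner ℝ (g r) (e r)) 0 s := by
      have d := (hA s).sub_const (A t)
      have d1 := (d.sin.neg.smul_const (T t)).add (d.cos.smul_const (T m))
      have d2 := (hg s).inner ℝ d1
      have o1 : inner ℝ (T s) (e s) = (0:ℝ) := by
        have h1 := (hT s).inner ℝ (hT s)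
        have h2 : (fun t => inner ℝ (T t) (T t)) = fun _ => (1:ℝ) := by
          funext t; rw [real_inner_self_eq_norm_sq, hu]; norm_num
        rw [h2] at h1
        have h3 := h1.unique (hasDerivAt_const s (1:ℝ))
        rw [real_inner_comm (T s) (T' s), hT'e s ⟨hts, hsm⟩, real_inner_smul_right] at h3
        have := hpos s
        have h4 : κ s * inner ℝ (T s) (e s) = 0 := by linarith
        exact (mul_eq_zero.1 h4).resolve_left this.ne'
      refine d2.congr_deriv ?_
      have o2 : (-(cos (A s - A t) * κ s)) • T t + (-sin (A s - A t) * κ s) • T m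
          = (- κ s) • T s := by
        rw [hTe s ⟨hts, hsm⟩]; module
      rw [o2, real_inner_smul_right, hgT]
      change _ + inner ℝ (T s) (e s) = _
      rw [o1]; simp
    have hκψ : ∀ r ∈ Set.Ioo t m, κ r * inner ℝ (g r) (e r) = -1 := by
      intro r hr
      rw [← real_inner_smul_right, ← hT'e r hr, hgT']
    have hne : inner ℝ (g s) (e s) ≠ (0:ℝ) := by
      intro h0
      have := hκψ s ⟨hts, hsm⟩
      rw [h0] at this; norm_num at this
    have := (hψ.inv hne).neg
    simp only [neg_zero, zero_div] at this
    refine this.congr_of_eventuallyEq (Filter.eventually_of_mem (hnb s ⟨hts, hsm⟩) ?_)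
    intro r hr
    have hr' := hκψ r hr
    have hne' : inner ℝ (g r) (e r) ≠ (0:ℝ) := by
      intro h0
      rw [h0] at hr'; norm_num at hr'
    simp only [Pi.neg_apply, Pi.inv_apply]
    field_simp
    linarith
  exact is_const_of_deriv_eq_zero (fun s => (key s).differentiableAt) (fun s => (key s).deriv)

/-- **Equality case (spherical).** If a simple closed spherical curve admits a nonzero smooth
`L`-periodic function `f` attaining equality in the lower bound
`4π²/L² ≤ μ₁(-4 d²/ds² + κ²)`, then the curvature `κ(s) = ‖γ''(s)‖` is constant. -/
theorem sturm_liouville_equality_spherical_curve_implies_constant_curvature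
    (L : ℝ) (hL : 0 < L) (γ : ℝ → EuclideanSpace ℝ (Fin 3))
    (hγ : ContDiff ℝ (⊤ : ℕ∞) γ)
    (hper : ∀ s : ℝ, γ (s + L) = γ s)
    (hunit : ∀ s : ℝ, ‖deriv γ s‖ = 1)
    (hsph : ∀ s : ℝ, ‖γ s‖ = 1)
    (hsimple : Set.InjOn γ (Set.Ico 0 L))
    (f : ℝ → ℝ) (hf : ContDiff ℝ (⊤ : ℕ∞) f) (hfper : ∀ s : ℝ, f (s + L) = f s)
    (hfne : ∃ s : ℝ, f s ≠ 0)
    (heq : (∫ s in (0:ℝ)..L,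
        (4 * (deriv f s)^2 + ‖deriv (deriv γ) s‖^2 * (f s)^2))
      = (4 * π^2 / L^2) * ∫ s in (0:ℝ)..L, (f s)^2) :
    ∀ s₁ s₂ : ℝ, ‖deriv (deriv γ) s₁‖ = ‖deriv (deriv γ) s₂‖ := by
  have hγ1 : ContDiff ℝ (⊤ : ℕ∞) (deriv γ) := (contDiff_infty_iff_deriv.1 hγ).2
  have hγ2 : ContDiff ℝ (⊤ : ℕ∞) (deriv (deriv γ)) := (contDiff_infty_iff_deriv.1 hγ1).2
  have hf1 : ContDiff ℝ (⊤ : ℕ∞) (deriv f) := (contDiff_infty_iff_deriv.1 hf).2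
  have hg : ∀ s, HasDerivAt γ (deriv γ s) s :=
    fun s => ((contDiff_infty_iff_deriv.1 hγ).1 s).hasDerivAt
  have hT : ∀ s, HasDerivAt (deriv γ) (deriv (deriv γ) s) s :=
    fun s => ((contDiff_infty_iff_deriv.1 hγ1).1 s).hasDerivAt
  have hfd : ∀ s, HasDerivAt f (deriv f s) s :=
    fun s => ((contDiff_infty_iff_deriv.1 hf).1 s).hasDerivAt
  have hgT : ∀ s, inner ℝ (γ s) (deriv γ s) = (0:ℝ) := by
    intro s
    have h1 := (hg s).inner ℝ (hg s)
    have h2 : (fun t => inner ℝ (γ t) (γ t)) = fun _ => (1:ℝ) := by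
      funext t; rw [real_inner_self_eq_norm_sq, hsph]; norm_num
    rw [h2] at h1
    have h3 := h1.unique (hasDerivAt_const s (1:ℝ))
    rw [real_inner_comm (γ s) (deriv γ s)] at h3
    linarith
  have hgT' : ∀ s, inner ℝ (γ s) (deriv (deriv γ) s) = (-1:ℝ) := by
    intro s
    have h1 := (hg s).inner ℝ (hT s)
    simp only [hgT] at h1
    have h3 := h1.unique (hasDerivAt_const s (0:ℝ))
    rw [real_inner_self_eq_norm_sq, hunit] at h3
    linarith
  have hκ1 : ∀ s, 1 ≤ ‖deriv (deriv γ) s‖ := by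
    intro s
    have := abs_real_inner_le_norm (γ s) (deriv (deriv γ) s)
    rw [hgT', hsph] at this
    simpa using this
  have hpos : ∀ s, 0 < ‖deriv (deriv γ) s‖ := fun s => by linarith [hκ1 s]
  have hTp : ∀ s, deriv γ (s + L) = deriv γ s := by
    intro s
    rw [← deriv_comp_add_const]; simp only [hper]
  have hT'p : ∀ s, deriv (deriv γ) (s + L) = deriv (deriv γ) s := by
    intro s
    rw [← deriv_comp_add_const]; simp only [hTp]
  set κ : ℝ → ℝ := fun s => ‖deriv (deriv γ) s‖ with hκ
  have cκ : Continuous κ := hγ2.continuous.norm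
  set A : ℝ → ℝ := fun s => ∫ t in (0:ℝ)..s, κ t with hAd
  have hA : ∀ s, HasDerivAt A (κ s) s := fun s =>
    intervalIntegral.integral_hasDerivAt_right (cκ.intervalIntegrable _ _)
      (cκ.stronglyMeasurableAtFilter _ _) cκ.continuousAt
  have pκ : Function.Periodic κ L := fun s => by simp only [hκ, hT'p]
  have hAp : ∀ s, A (s + L) = A s + A L := by
    intro s
    have := pκ.intervalIntegral_add_eq s 0
    rw [zero_add] at this
    simp only [hAd]
    rw [← this, intervalIntegral.integral_add_adjacent_intervals] <;>
      exact cκ.intervalIntegrable _ _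
  have cA : Continuous A := continuous_iff_continuousAt.2 fun s => (hA s).continuousAt
  have hmono : StrictMono A := strictMono_of_deriv_pos (fun s => by rw [(hA s).deriv]; exact hpos s)
  have hA0 : A 0 = 0 := by simp [hAd]
  have hAL : 0 < A L := by rw [← hA0]; exact hmono hL
  have hgrow : Monotone (fun s => A s - s) := by
    apply monotone_of_deriv_nonneg
    · exact fun s => ((hA s).sub (hasDerivAt_id s)).differentiableAt
    · intro s
      have : deriv (fun s => A s - s) s = κ s - 1 := ((hA s).sub (hasDerivAt_id s)).deriv
      rw [this]; linarith [hκ1 s]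
  have hsurj : Function.Surjective A := by
    intro y
    rcases le_total 0 y with h | h
    · have := hgrow h
      simp only [hA0] at this
      exact mem_range_of_exists_le_of_exists_ge cA ⟨0, by linarith⟩ ⟨y, by linarith⟩
    · have := hgrow h
      simp only [hA0] at this
      exact mem_range_of_exists_le_of_exists_ge cA ⟨y, by linarith⟩ ⟨0, by linarith⟩
  have hK := total_le L hL f (deriv f) A κ (A L) hfd hf1.continuous hA cκ hpos hfper hAp hAL hfne heq
  have hF := fenchel_eq L hL (A L) γ (deriv γ) (deriv (deriv γ)) A κ hg hT hunit hA
    (fun s => rfl) hpos hper hTp hAp hAL hK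
  exact planar_const γ (deriv γ) (deriv (deriv γ)) A κ hg hT hunit hA hpos hgT hgT' hsurj hF.2
end

section
/- Let γ : ℝ → ℝ² be a closed plane curve of length L, parametrized by arclength, whose tangent vector has odd rotation number, and with curvature κ(s) = ‖γ''(s)‖. If there exists a nonzero smooth L-periodic function f : ℝ → ℝ with ∫₀^L (4 f'(s)² + κ(s)² f(s)²) ds = (4π²/L²) ∫₀^L f(s)² ds (i.e., equality holds in the lower bound 4π²/L² ≤ μ₁(−4 d²/ds² + κ²)), then the curvature κ is constant. -/
open Real MeasureTheory

theorem wirt_s3 (L : ℝ) (hL : 0 < L) (g g' : ℝ → ℂ) (hg : ∀ x, HasDerivAt g (g' x) x)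
    (hg' : Continuous g') (hanti : g L = - g 0)
    (heq : ∫ s in (0:ℝ)..L, ‖g' s‖^2 = (π/L)^2 * ∫ s in (0:ℝ)..L, ‖g s‖^2) :
    ∃ u v : ℂ, ∀ s ∈ Set.Icc 0 L, g s = u * Complex.exp (Complex.I * (π / L) * s)
      + v * Complex.exp (-(Complex.I * (π / L) * s)) := by
  have : Fact (0 < L) := ⟨hL⟩
  have hLC : (L : ℂ) ≠ 0 := by exact_mod_cast hL.ne'
  have hgc : Continuous g := continuous_iff_continuousAt.2 fun x => (hg x).continuousAt
  set h : ℝ → ℂ := fun s => Complex.exp (-(Complex.I * (π / L) * s)) * g s with hh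
  set k : ℝ → ℂ := fun s => Complex.exp (-(Complex.I * (π / L) * s)) * g' s with hk
  have hhc : Continuous h := by fun_prop
  have hkc : Continuous k := by fun_prop
  have hnorm : ∀ s : ℝ, ‖Complex.exp (-(Complex.I * (π / L) * s))‖ = 1 := by
    intro s
    rw [Complex.norm_exp]
    simp [← Complex.ofReal_div, Complex.mul_re]
  have hend : h L = h 0 := by
    have : Complex.exp (-(Complex.I * (π / L) * L)) = -1 := by
      rw [show -(Complex.I * (π / L) * (L:ℂ)) = -(π * Complex.I) by field_simp, Complex.exp_neg,
        Complex.exp_pi_mul_I]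
      norm_num
    simp [hh, this, hanti]
  have hab : (0:ℝ) < 0 + L := by simpa using hL
  -- coefficients
  have hcoef : ∀ n : ℤ, fourierCoeffOn hab k n
      = (Complex.I * (π / L) * (2 * n + 1)) * fourierCoeffOn hab h n := by
    intro n
    rw [fourierCoeffOn_eq_integral, fourierCoeffOn_eq_integral]
    have hT : (0 + L - 0 : ℝ) = L := by ring
    rw [hT, zero_add]
    have hd : ∀ x : ℝ, HasDerivAt (fun y : ℝ => fourier (-n) (y : AddCircle L) * h y)
        (fourier (-n) (x : AddCircle L) * k x -
          (Complex.I * (π / L) * (2 * n + 1)) * (fourier (-n) (x : AddCircle L) * h x)) x := by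
      intro x
      have h1 := hasDerivAt_fourier_neg L n x
      have h2 : HasDerivAt (fun s : ℝ => -(Complex.I * (π / L) * s)) (-(Complex.I * (π / L) * 1)) x :=
        ((Complex.ofRealCLM.hasDerivAt (x := x)).const_mul (Complex.I * (π / L))).neg
      have h3 : HasDerivAt (fun y : ℝ => fourier (-n) (y : AddCircle L) * h y) _ x :=
        h1.mul ((h2.cexp).mul (hg x))
      refine h3.congr_deriv ?_
      simp only [hh, hk]
      field_simp
      ring
    have hfc : Continuous fun y : ℝ => fourier (-n) (y : AddCircle L) :=
      (map_continuous (fourier (-n))).comp (AddCircle.continuous_mk' _)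
    have hI := intervalIntegral.integral_eq_sub_of_hasDerivAt (a := 0) (b := L)
      (fun x _ => hd x) (Continuous.intervalIntegrable (by fun_prop) _ _)
    rw [intervalIntegral.integral_sub (Continuous.intervalIntegrable (by fun_prop) _ _)
      (Continuous.intervalIntegrable (by fun_prop) _ _),
      intervalIntegral.integral_const_mul] at hI
    have hLL : ((L:ℝ) : AddCircle L) = ((0:ℝ) : AddCircle L) := by simp
    rw [hend, hLL, sub_self, sub_eq_zero] at hI
    simp only [smul_eq_mul, hI, Complex.real_smul]
    ring
  have hmem : ∀ {p : ℝ → ℂ}, Continuous p → MemLp p 2 (volume.restrict (Set.Ioc 0 (0 + L))) := by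
    intro p hp
    obtain ⟨C, hC⟩ := (isCompact_Icc (a := (0:ℝ)) (b := 0 + L)).exists_bound_of_continuousOn
      hp.continuousOn
    refine MemLp.of_bound hp.aestronglyMeasurable C ?_
    filter_upwards [ae_restrict_mem measurableSet_Ioc] with x hx
    exact hC x ⟨hx.1.le, hx.2⟩
  have e1 : ∀ x, ‖h x‖ = ‖g x‖ := fun x => by simp [hh, hnorm]
  have e2 : ∀ x, ‖k x‖ = ‖g' x‖ := fun x => by simp [hk, hnorm]
  have S1 : HasSum (fun i => ‖fourierCoeffOn hab h i‖ ^ 2) (L⁻¹ * ∫ x in (0:ℝ)..L, ‖g x‖ ^ 2) := by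
    have := hasSum_sq_fourierCoeffOn hab (hmem hhc)
    simpa only [e1, e2, zero_add, sub_zero, smul_eq_mul] using this
  have S2 : HasSum (fun i => ‖fourierCoeffOn hab k i‖ ^ 2) (L⁻¹ * ∫ x in (0:ℝ)..L, ‖g' x‖ ^ 2) := by
    have := hasSum_sq_fourierCoeffOn hab (hmem hkc)
    simpa only [e1, e2, zero_add, sub_zero, smul_eq_mul] using this
  rw [heq] at S2
  have S3 := S2.sub (S1.mul_left ((π/L)^2))
  have S4 : HasSum (fun n : ℤ => (π/L)^2 * ((2*n+1)^2 - 1) * ‖fourierCoeffOn hab h n‖^2) 0 := by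
    have hfun : ∀ n : ℤ, ‖fourierCoeffOn hab k n‖ ^ 2 - (π/L)^2 * ‖fourierCoeffOn hab h n‖ ^ 2
        = (π/L)^2 * ((2*n+1)^2 - 1) * ‖fourierCoeffOn hab h n‖^2 := by
      intro n
      rw [hcoef, norm_mul, norm_mul, norm_mul, Complex.norm_I]
      have : ‖(2 * (n:ℂ) + 1)‖ = |2 * (n:ℝ) + 1| := by
        rw [← Real.norm_eq_abs, ← Complex.norm_real]; push_cast; rfl
      rw [this, ← Complex.ofReal_div, Complex.norm_real, Real.norm_eq_abs, mul_pow, mul_pow, mul_pow,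
        sq_abs, sq_abs]
      ring
    have h0 : L⁻¹ * ((π / L) ^ 2 * ∫ (s : ℝ) in (0:ℝ)..L, ‖g s‖ ^ 2)
        - (π / L) ^ 2 * (L⁻¹ * ∫ (x : ℝ) in (0:ℝ)..L, ‖g x‖ ^ 2) = 0 := by ring
    rw [h0] at S3
    simpa only [hfun] using S3
  have hintnn : ∀ n : ℤ, (0:ℝ) ≤ (2*n+1)^2 - 1 := by
    intro n
    have : (0:ℤ) ≤ (2*n+1)^2 - 1 := by
      rcases le_or_gt 0 n with h | h <;> nlinarith
    exact_mod_cast this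
  have hz := (hasSum_zero_iff_of_nonneg (fun n => by have := hintnn n; positivity)).1 S4
  have hc0 : ∀ n : ℤ, n ∉ ({0, -1} : Finset ℤ) → fourierCoeffOn hab h n = 0 := by
    intro n hn
    have := congrFun hz n
    simp only [Pi.zero_apply, mul_eq_zero] at this
    simp only [Finset.mem_insert, Finset.mem_singleton, not_or] at hn
    rcases this with (h1 | h1) | h1
    · exfalso; have := pow_eq_zero_iff (two_ne_zero) |>.1 h1
      have : 0 < π / L := by positivity
      linarith
    · exfalso
      have h2 : ((n * (n + 1) : ℤ) : ℝ) = 0 := by push_cast; linarith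
      have h3 : n * (n+1) = 0 := by exact_mod_cast h2
      rcases mul_eq_zero.1 h3 with h | h
      · exact hn.1 h
      · exact hn.2 (by omega)
    · simpa using h1
  let F : C(AddCircle L, ℂ) := ⟨AddCircle.liftIco L 0 h, AddCircle.liftIco_continuous
    (by simpa using hend.symm) hhc.continuousOn⟩
  have hF : ∀ n, fourierCoeff F n = fourierCoeffOn hab h n := fun n => fourierCoeff_liftIco_eq h n
  have hFs : Summable (fourierCoeff F) :=
    summable_of_ne_finset_zero (s := {0, -1}) (fun n hn => by rw [hF, hc0 n hn])
  refine ⟨fourierCoeff F 0, fourierCoeff F (-1), ?_⟩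
  have key : ∀ s ∈ Set.Ico 0 L, h s = fourierCoeff F 0 + fourierCoeff F (-1) *
      Complex.exp (-(2 * (Complex.I * (π / L) * s))) := by
    intro s hs
    have H := has_pointwise_sum_fourier_series_of_summable hFs (s : AddCircle L)
    have H2 : HasSum (fun i => fourierCoeff F i • fourier i (s : AddCircle L))
        (∑ i ∈ ({0, -1} : Finset ℤ), fourierCoeff F i • fourier i (s : AddCircle L)) :=
      hasSum_sum_of_ne_finset_zero (fun n hn => by rw [hF, hc0 n hn, zero_smul])
    have H3 := H.unique H2
    have H4 : F (s : AddCircle L) = h s :=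
      (AddCircle.liftIco_zero_coe_apply hs : AddCircle.liftIco L 0 h (s : AddCircle L) = h s)
    rw [H4] at H3
    rw [H3, Finset.sum_pair (by norm_num)]
    simp only [smul_eq_mul, fourier_coe_apply]
    congr 1
    · simp
    · congr 2
      push_cast
      ring
  have key2 : ∀ s ∈ Set.Icc 0 L, h s = fourierCoeff F 0 + fourierCoeff F (-1) *
      Complex.exp (-(2 * (Complex.I * (π / L) * s))) := by
    intro s hs
    rcases hs.2.lt_or_eq with h1 | h1
    · exact key s ⟨hs.1, h1⟩
    · rw [h1, hend, key 0 ⟨le_rfl, hL⟩]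
      congr 2
      rw [show -(2 * (Complex.I * (π / L) * (L:ℂ))) = -(2 * π * Complex.I) by field_simp,
        Complex.exp_neg (2 * π * Complex.I), Complex.exp_two_pi_mul_I]
      simp
  intro s hs
  have := key2 s hs
  simp only [hh] at this
  set E := Complex.I * (π / L) * (s:ℂ)
  have h1 : g s = Complex.exp E * (Complex.exp (-E) * g s) := by
    rw [← mul_assoc, ← Complex.exp_add]; simp
  rw [h1, this, mul_add, mul_comm _ (fourierCoeff F 0)]
  congr 1
  rw [mul_left_comm, ← Complex.exp_add]
  congr 2
  ring

theorem moebius_mean (L : ℝ) (hL : 0 < L) (a b c d : ℂ) (hcd : ‖d‖ < ‖c‖) :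
    ∫ s in (0:ℝ)..L, (a * Complex.exp (2 * (Complex.I * (π / L) * s)) + b) /
      (c + d * Complex.exp (2 * (Complex.I * (π / L) * s))) = L * (b / c) := by
  set F : ℂ → ℂ := fun z => (a * z + b) / (c + d * z) with hF
  have hne : ∀ z ∈ Metric.closedBall (0:ℂ) 1, c + d * z ≠ 0 := by
    intro z hz h0
    have hz1 : ‖z‖ ≤ 1 := by simpa using hz
    have h1 : c = -(d * z) := by linear_combination h0
    have h2 : ‖c‖ ≤ ‖d‖ := by
      rw [h1, norm_neg, norm_mul]
      exact mul_le_of_le_one_right (norm_nonneg _) hz1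
    linarith
  have hd : DiffContOnCl ℂ F (Metric.ball 0 |1|) := by
    apply DifferentiableOn.diffContOnCl
    rw [abs_one, closure_ball _ one_ne_zero]
    exact DifferentiableOn.div (by fun_prop) (by fun_prop) hne
  have hm := hd.circleAverage
  rw [Real.circleAverage_def] at hm
  have h1 := intervalIntegral.integral_comp_mul_left (a := 0) (b := L)
    (fun t => F (circleMap 0 1 t)) (c := 2 * π / L) (by positivity)
  have h2 : 2 * π / L * L = 2 * π := by field_simp
  rw [h2, mul_zero] at h1
  have h3 : ∀ s : ℝ, F (circleMap 0 1 (2 * π / L * s)) =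
    (a * Complex.exp (2 * (Complex.I * (π / L) * s)) + b) /
      (c + d * Complex.exp (2 * (Complex.I * (π / L) * s))) := by
    intro s
    have : circleMap 0 1 (2 * π / L * s) = Complex.exp (2 * (Complex.I * (π / L) * s)) := by
      simp only [circleMap, zero_add, Complex.ofReal_one, one_mul]
      congr 1
      push_cast
      ring
    rw [this]
  simp only [h3] at h1
  rw [h1]
  have h4 : F 0 = b / c := by simp [hF]
  rw [h4] at hm
  rw [← hm, Complex.real_smul, Complex.real_smul]
  push_cast
  have hLC : (L : ℂ) ≠ 0 := by exact_mod_cast hL.ne'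
  have hp : (π : ℂ) ≠ 0 := by exact_mod_cast pi_pos.ne'
  field_simp

theorem core (L : ℝ) (hL : 0 < L) (f f' θ θ' : ℝ → ℝ)
    (hf : ∀ s, HasDerivAt f (f' s) s) (hθ : ∀ s, HasDerivAt θ (θ' s) s)
    (hf' : Continuous f') (hθ' : Continuous θ') (n : ℤ) (hn : Odd n)
    (hrot : θ L - θ 0 = 2 * π * n) (hfp : f L = f 0) (hfne : ∃ s ∈ Set.Icc 0 L, f s ≠ 0)
    (heq : (∫ s in (0:ℝ)..L, (4 * (f' s)^2 + (θ' s)^2 * (f s)^2))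
      = (4 * π^2 / L^2) * ∫ s in (0:ℝ)..L, (f s)^2)
    (hclosed : ∫ s in (0:ℝ)..L, Complex.exp (Complex.I * θ s) = 0) :
    ∃ c, ∀ s ∈ Set.Icc 0 L, θ' s = c := by
  have hLC : (L : ℂ) ≠ 0 := by exact_mod_cast hL.ne'
  have hfc : Continuous f := continuous_iff_continuousAt.2 fun x => (hf x).continuousAt
  have hθc : Continuous θ := continuous_iff_continuousAt.2 fun x => (hθ x).continuousAt
  set w : ℝ → ℂ := fun s => Complex.exp (Complex.I * (θ s / 2)) with hw
  have hwn : ∀ s, ‖w s‖ = 1 := by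
    intro s
    have : Complex.I * ((θ s : ℂ) / 2) = ((θ s / 2 : ℝ) : ℂ) * Complex.I := by push_cast; ring
    rw [hw]; simp only
    rw [this, Complex.norm_exp_ofReal_mul_I]
  set p : ℝ → ℂ := fun s => f' s + Complex.I * (f s * θ' s / 2) with hp
  set g : ℝ → ℂ := fun s => f s * w s with hg
  set g' : ℝ → ℂ := fun s => p s * w s with hg'
  have hgd : ∀ s, HasDerivAt g (g' s) s := by
    intro s
    have h1 : HasDerivAt (fun s : ℝ => Complex.I * ((θ s : ℂ) / 2)) (Complex.I * ((θ' s : ℂ) / 2)) s :=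
      ((hθ s).ofReal_comp.div_const 2).const_mul _
    have h2 : HasDerivAt g _ s := (hf s).ofReal_comp.mul h1.cexp
    refine h2.congr_deriv ?_
    simp only [hg', hp, hw]
    ring
  have hng : ∀ s, ‖g s‖^2 = (f s)^2 := by
    intro s; simp [hg, hwn]
  have hng' : ∀ s, ‖g' s‖^2 = (f' s)^2 + (f s * θ' s / 2)^2 := by
    intro s
    have : p s = ((f' s : ℝ) : ℂ) + ((f s * θ' s / 2 : ℝ) : ℂ) * Complex.I := by
      simp only [hp]; push_cast; ring
    simp only [hg', norm_mul, hwn, mul_one]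
    rw [this, ← Complex.normSq_eq_norm_sq, Complex.normSq_add_mul_I]
  have hgc' : Continuous g' := by
    simp only [hg', hp, hw]; fun_prop
  have hanti : g L = - g 0 := by
    have h1 : w L = - w 0 := by
      obtain ⟨m, rfl⟩ := hn
      have h2 : θ L = θ 0 + 2 * π * ((2 * m + 1 : ℤ) : ℝ) := by linarith
      have h3 : Complex.I * ((θ L : ℂ) / 2) = Complex.I * ((θ 0 : ℂ) / 2) +
          (m * (2 * π * Complex.I) + π * Complex.I) := by
        rw [h2]; push_cast; ring
      simp only [hw]
      rw [h3, Complex.exp_add, Complex.exp_add, Complex.exp_int_mul_two_pi_mul_I,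
        Complex.exp_pi_mul_I]
      ring
    simp only [hg, h1, hfp]; ring
  have heq2 : ∫ s in (0:ℝ)..L, ‖g' s‖^2 = (π/L)^2 * ∫ s in (0:ℝ)..L, ‖g s‖^2 := by
    simp only [hng, hng']
    have : (∫ s in (0:ℝ)..L, (4 * (f' s)^2 + (θ' s)^2 * (f s)^2)) =
        4 * ∫ s in (0:ℝ)..L, ((f' s)^2 + (f s * θ' s / 2)^2) := by
      rw [← intervalIntegral.integral_const_mul]
      congr 1; ext s; ring
    rw [this] at heq
    have e : 4 * π^2 / L^2 = 4 * (π/L)^2 := by ring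
    rw [e] at heq
    linarith
  obtain ⟨u, v, huv⟩ := wirt_s3 L hL g g' hgd hgc' hanti heq2
  set ω : ℝ := π / L with hω
  have hωp : 0 < ω := by positivity
  have hωC : (π / L : ℂ) = (ω : ℂ) := by simp [hω]
  simp only [hωC] at huv
  set e : ℝ → ℂ := fun s => Complex.exp (Complex.I * ω * s) with he
  set e' : ℝ → ℂ := fun s => Complex.exp (-(Complex.I * ω * s)) with he'
  have hen : ∀ s, ‖e s‖ = 1 := by
    intro s; simp only [he]; rw [Complex.norm_exp]; simp
  have hen' : ∀ s, ‖e' s‖ = 1 := by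
    intro s; simp only [he']; rw [Complex.norm_exp]; simp
  have hgs : ∀ s ∈ Set.Icc 0 L, g s = u * e s + v * e' s := huv
  have hgs' : ∀ s ∈ Set.Icc 0 L, g' s = Complex.I * ω * (u * e s - v * e' s) := by
    intro s hs
    have h0 : HasDerivAt (fun s : ℝ => Complex.I * ω * (s : ℂ)) (Complex.I * ω * 1) s :=
      (Complex.ofRealCLM.hasDerivAt (x := s)).const_mul (Complex.I * ω)
    have h1 : HasDerivAt (fun s => u * e s + v * e' s) _ s :=
      (h0.cexp.const_mul u).add (h0.neg.cexp.const_mul v)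
    have h2 : HasDerivWithinAt (fun s => u * e s + v * e' s) (g' s) (Set.Icc 0 L) s :=
      (hgd s).hasDerivWithinAt.congr (fun x hx => (hgs x hx).symm) (hgs s hs).symm
    have h3 := (uniqueDiffOn_Icc hL s hs).eq_deriv _ h2 h1.hasDerivWithinAt
    rw [h3]
    simp only [he, he', Pi.neg_apply]
    ring
  have na : ∀ s, Complex.normSq (u * e s) = Complex.normSq u := by
    intro s; simp [Complex.normSq_eq_norm_sq, hen]
  have nb : ∀ s, Complex.normSq (v * e' s) = Complex.normSq v := by
    intro s; simp [Complex.normSq_eq_norm_sq, hen']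
  have hwr : ∀ s ∈ Set.Icc 0 L, (f s)^2 * θ' s / 2 = ω * (Complex.normSq u - Complex.normSq v) := by
    intro s hs
    have h1 : (starRingEnd ℂ (g s) * g' s).im = (f s)^2 * θ' s / 2 := by
      have : starRingEnd ℂ (g s) * g' s = f s * p s := by
        simp only [hg, hg', map_mul, Complex.conj_ofReal]
        have h := Complex.conj_mul' (w s)
        rw [hwn] at h
        push_cast at h
        linear_combination (f s * p s : ℂ) * h
      rw [this]
      simp [hp, ← Complex.ofReal_mul]
      ring
    rw [← h1, hgs s hs, hgs' s hs, ← na s, ← nb s]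
    simp [Complex.normSq_apply, -Complex.mul_re, -Complex.mul_im] 
    simp [Complex.mul_re, Complex.mul_im]
    ring
  have hsum : ∀ s ∈ Set.Icc 0 L, (f' s)^2 + (f s * θ' s / 2)^2 + ω^2 * (f s)^2 =
      2 * ω^2 * (Complex.normSq u + Complex.normSq v) := by
    intro s hs
    rw [← hng' s, ← hng s, hgs s hs, hgs' s hs, ← na s, ← nb s, ← Complex.normSq_eq_norm_sq,
      ← Complex.normSq_eq_norm_sq]
    generalize u * e s = a
    generalize v * e' s = b
    simp [Complex.normSq_apply]
    ring
  have hpos : 0 < Complex.normSq u + Complex.normSq v := by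
    obtain ⟨s, hs, hfs⟩ := hfne
    have h1 := hsum s hs
    have : 0 < ω^2 * (f s)^2 := by positivity
    have h2 : 0 < 2 * ω^2 * (Complex.normSq u + Complex.normSq v) := by
      rw [← h1]; positivity
    exact pos_of_mul_pos_right h2 (by positivity)
  have hfin : (u = 0 ∨ v = 0) → ∃ c, ∀ s ∈ Set.Icc 0 L, θ' s = c := by
    intro h
    have hf2 : ∀ s ∈ Set.Icc 0 L, (f s)^2 = Complex.normSq u + Complex.normSq v := by
      intro s hs
      rw [← hng s, hgs s hs, ← na s, ← nb s, ← Complex.normSq_eq_norm_sq]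
      rcases h with h | h <;> simp [h]
    refine ⟨2 * ω * (Complex.normSq u - Complex.normSq v) / (Complex.normSq u + Complex.normSq v), ?_⟩
    intro s hs
    have := hwr s hs
    rw [hf2 s hs] at this
    rw [eq_div_iff hpos.ne']
    linarith
  have hw2 : ∀ s, Complex.exp (Complex.I * θ s) = w s * w s := by
    intro s; simp only [hw]; rw [← Complex.exp_add]; congr 1; ring
  have hez : ∀ s : ℝ, Complex.exp (2 * (Complex.I * ω * s)) = e s * e s := by
    intro s; simp only [he]; rw [← Complex.exp_add]; congr 1; ring
  have hee : ∀ s, e s * e' s = 1 := by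
    intro s; simp only [he, he']; rw [← Complex.exp_add]; simp
  have hce : ∀ s, starRingEnd ℂ (e s) = e' s := by
    intro s; simp only [he, he']; rw [← Complex.exp_conj]; simp
  have hce' : ∀ s, starRingEnd ℂ (e' s) = e s := by
    intro s; rw [← hce]; simp
  have hcw : ∀ s, starRingEnd ℂ (w s) * w s = 1 := by
    intro s
    have h := Complex.conj_mul' (w s)
    rw [hwn] at h
    simpa using h
  -- cross relation
  have hcross : ∀ s ∈ Set.Icc 0 L, f s ≠ 0 →
      (starRingEnd ℂ u + starRingEnd ℂ v * (e s * e s)) * (w s * w s) = u * (e s * e s) + v := by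
    intro s hs hfs
    have h1 := hgs s hs
    have h2 := congrArg (starRingEnd ℂ) h1
    simp only [hg, map_mul, map_add, Complex.conj_ofReal, hce, hce'] at h1 h2
    have h3 := hcw s
    have h4 := hee s
    linear_combination (-e s * w s * w s) * h2 + (e s) * h1 + (f s * e s * w s) * h3
      + (v - starRingEnd ℂ u * w s * w s) * h4
  rcases lt_trichotomy ‖u‖ ‖v‖ with hlt | heq' | hlt
  · have hne : ∀ s ∈ Set.Icc 0 L, f s ≠ 0 := by
      intro s hs h0
      have h1 := hgs s hs
      simp only [hg, h0, Complex.ofReal_zero, zero_mul] at h1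
      have h2 : u * e s = - (v * e' s) := by linear_combination -h1
      have h3 := congrArg norm h2
      simp [hen, hen'] at h3
      linarith
    have hm := moebius_mean L hL (starRingEnd ℂ v) (starRingEnd ℂ u) v u hlt
    have hc2 : ∫ s in (0:ℝ)..L, starRingEnd ℂ (Complex.exp (Complex.I * θ s)) = 0 := by
      rw [intervalIntegral.intervalIntegral_eq_integral_uIoc] at hclosed ⊢
      rw [integral_conj]
      simpa [hL.le] using hclosed
    have : ∫ s in (0:ℝ)..L, starRingEnd ℂ (Complex.exp (Complex.I * θ s)) = L * (starRingEnd ℂ u / v) := by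
      rw [← hm]
      apply intervalIntegral.integral_congr
      intro s hs
      rw [Set.uIcc_of_le hL.le] at hs
      have h1 := hcross s hs (hne s hs)
      simp only [hωC, hez, hw2]
      have hd : v + u * (e s * e s) ≠ 0 := by
        intro h0
        have h2 : v = -(u * (e s * e s)) := by linear_combination h0
        have h3 := congrArg norm h2
        simp [hen] at h3
        linarith
      rw [eq_div_iff hd, map_mul]
      have h3 := hcw s
      linear_combination (-(starRingEnd ℂ (w s))^2) * h1 + (starRingEnd ℂ u + starRingEnd ℂ v * (e s * e s)) * (starRingEnd ℂ (w s) * w s + 1) * h3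
    rw [hc2] at this
    have hv0 : v ≠ 0 := by
      rintro rfl; simp at hlt; linarith [norm_nonneg u]
    apply hfin
    left
    simpa [hLC, hv0] using this.symm
  · exfalso
    have h0 : Complex.normSq u - Complex.normSq v = 0 := by
      simp [Complex.normSq_eq_norm_sq, heq']
    have hz : ∀ s ∈ Set.Ioo 0 L, θ' s = 0 := by
      intro s hs
      by_contra hne
      have h1 : ∀ᶠ x in nhds s, f x = 0 := by
        filter_upwards [hθ'.continuousAt.eventually_ne hne, Ioo_mem_nhds hs.1 hs.2] with x hx hx2
        have := hwr x ⟨hx2.1.le, hx2.2.le⟩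
        rw [h0, mul_zero] at this
        have h3 : (f x)^2 * θ' x = 0 := by linarith
        simpa [hx] using h3
      have h2 : f' s = 0 := by
        have h3 : HasDerivAt f 0 s := (hasDerivAt_const s (0:ℝ)).congr_of_eventuallyEq h1
        exact (hf s).unique h3
      have h4 := hsum s ⟨hs.1.le, hs.2.le⟩
      rw [h2, h1.self_of_nhds] at h4
      have : 0 < 2 * ω^2 * (Complex.normSq u + Complex.normSq v) := by positivity
      rw [← h4] at this
      norm_num at this
    have hI := intervalIntegral.integral_eq_sub_of_hasDerivAt (a := 0) (b := L)
      (fun x _ => hθ x) (hθ'.intervalIntegrable _ _)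
    have hI0 : ∫ s in (0:ℝ)..L, θ' s = ∫ s in (0:ℝ)..L, (0:ℝ) :=
      intervalIntegral.integral_congr_Ioo_of_le hL.le (fun x hx => hz x hx)
    rw [hI0, hrot] at hI
    simp at hI
    have : n = 0 := by simpa [pi_ne_zero] using hI
    subst this
    simp at hn
  · have hne : ∀ s ∈ Set.Icc 0 L, f s ≠ 0 := by
      intro s hs h0
      have h1 := hgs s hs
      simp only [hg, h0, Complex.ofReal_zero, zero_mul] at h1
      have h2 : u * e s = - (v * e' s) := by linear_combination -h1
      have h3 := congrArg norm h2
      simp [hen, hen'] at h3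
      linarith
    have hm := moebius_mean L hL u v (starRingEnd ℂ u) (starRingEnd ℂ v) (by simpa using hlt)
    have : ∫ s in (0:ℝ)..L, (Complex.exp (Complex.I * θ s)) = L * (v / starRingEnd ℂ u) := by
      rw [← hm]
      apply intervalIntegral.integral_congr
      intro s hs
      rw [Set.uIcc_of_le hL.le] at hs
      have h1 := hcross s hs (hne s hs)
      simp only [hωC, hez, hw2]
      have hd : starRingEnd ℂ u + starRingEnd ℂ v * (e s * e s) ≠ 0 := by
        intro h0
        have h2 : starRingEnd ℂ u = -(starRingEnd ℂ v * (e s * e s)) := by linear_combination h0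
        have h3 := congrArg norm h2
        simp [hen] at h3
        linarith
      rw [eq_div_iff hd]
      linear_combination h1
    rw [hclosed] at this
    have hu0 : u ≠ 0 := by
      rintro rfl; simp at hlt; linarith [norm_nonneg v]
    apply hfin
    right
    simpa [hLC, hu0] using this.symm

theorem sturm_liouville_equality_plane_curve_implies_constant_curvature
    (L : ℝ) (hL : 0 < L) (γ : ℝ → EuclideanSpace ℝ (Fin 2))
    (hγ : ContDiff ℝ (⊤ : ℕ∞) γ)
    (hper : ∀ s : ℝ, γ (s + L) = γ s)
    (hunit : ∀ s : ℝ, ‖deriv γ s‖ = 1)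
    (θ : ℝ → ℝ) (hθ : ContDiff ℝ (⊤ : ℕ∞) θ)
    (htangent : ∀ s : ℝ, deriv γ s
      = (WithLp.equiv 2 (Fin 2 → ℝ)).symm ![Real.cos (θ s), Real.sin (θ s)])
    (n : ℤ) (hn : Odd n) (hrot : θ L - θ 0 = 2 * π * n)
    (f : ℝ → ℝ) (hf : ContDiff ℝ (⊤ : ℕ∞) f) (hfper : ∀ s : ℝ, f (s + L) = f s)
    (hfne : ∃ s : ℝ, f s ≠ 0)
    (heq : (∫ s in (0:ℝ)..L,
        (4 * (deriv f s)^2 + ‖deriv (deriv γ) s‖^2 * (f s)^2))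
      = (4 * π^2 / L^2) * ∫ s in (0:ℝ)..L, (f s)^2) :
    ∀ s₁ s₂ : ℝ, ‖deriv (deriv γ) s₁‖ = ‖deriv (deriv γ) s₂‖ := by
  have hθd : ∀ s, HasDerivAt θ (deriv θ s) s := fun s =>
    (hθ.differentiable (by simp) s).hasDerivAt
  have hfd : ∀ s, HasDerivAt f (deriv f s) s := fun s =>
    (hf.differentiable (by simp) s).hasDerivAt
  have hγd : ∀ s, HasDerivAt γ (deriv γ s) s := fun s =>
    (hγ.differentiable (by simp) s).hasDerivAt
  have hθ' : Continuous (deriv θ) := hθ.continuous_deriv (by simp)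
  have hf' : Continuous (deriv f) := hf.continuous_deriv (by simp)
  have hθc : Continuous θ := hθ.continuous
  have hcurv : ∀ s, ‖deriv (deriv γ) s‖ = |deriv θ s| := by
    intro s
    have h1 : deriv γ = fun s => WithLp.toLp 2 ![Real.cos (θ s), Real.sin (θ s)] := by
      ext1 s; rw [htangent]; rfl
    have h2 : HasDerivAt (fun s => WithLp.toLp 2 ![Real.cos (θ s), Real.sin (θ s)])
        (WithLp.toLp 2 ![-Real.sin (θ s) * deriv θ s, Real.cos (θ s) * deriv θ s] : EuclideanSpace ℝ (Fin 2)) s := by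
      refine (PiLp.continuousLinearEquiv 2 ℝ (fun _ : Fin 2 => ℝ)).symm.hasFDerivAt.comp_hasDerivAt s (f := fun s => ![Real.cos (θ s), Real.sin (θ s)]) (f' := ![-Real.sin (θ s) * deriv θ s, Real.cos (θ s) * deriv θ s]) ?_
      rw [hasDerivAt_pi]
      intro i
      fin_cases i
      · simpa using (hθd s).cos
      · simpa using (hθd s).sin
    rw [h1, h2.deriv, EuclideanSpace.norm_eq]
    simp only [Fin.sum_univ_two]
    rw [← Real.sqrt_sq_eq_abs]
    congr 1
    simp [mul_pow]
    nlinarith [Real.sin_sq_add_cos_sq (θ s)]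
  have hclosed : ∫ s in (0:ℝ)..L, Complex.exp (Complex.I * θ s) = 0 := by
    have hco : ∀ i : Fin 2, ∀ s, HasDerivAt (fun x => γ x i) (deriv γ s i) s := fun i s =>
      ((EuclideanSpace.proj i : EuclideanSpace ℝ (Fin 2) →L[ℝ] ℝ).hasFDerivAt.comp_hasDerivAt s (hγd s))
    have hG : ∀ s, HasDerivAt (fun x => ((γ x 0 : ℝ) : ℂ) + Complex.I * ((γ x 1 : ℝ) : ℂ))
        (Complex.exp (Complex.I * θ s)) s := by
      intro s
      refine ((hco 0 s).ofReal_comp.add ((hco 1 s).ofReal_comp.const_mul Complex.I)).congr_deriv ?_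
      rw [htangent, mul_comm Complex.I (θ s : ℂ), Complex.exp_mul_I]
      simp
      ring
    rw [intervalIntegral.integral_eq_sub_of_hasDerivAt (fun x _ => hG x)
      (Continuous.intervalIntegrable (by fun_prop) _ _)]
    have := hper 0
    rw [zero_add] at this
    rw [this, sub_self]
  have hfP : Function.Periodic f L := hfper
  have hγP : Function.Periodic (fun s => ‖deriv (deriv γ) s‖) L := by
    have h1 : Function.Periodic (deriv γ) L := by
      intro s
      rw [← deriv_comp_add_const]
      congr 1; ext1 x; exact hper x
    intro s
    simp only
    rw [← deriv_comp_add_const]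
    congr 2; ext1 x; exact h1 x
  simp only [hcurv, sq_abs] at heq
  have hfne2 : ∃ s ∈ Set.Icc 0 L, f s ≠ 0 := by
    obtain ⟨s, hs⟩ := hfne
    obtain ⟨y, hy, hy2⟩ := hfP.exists_mem_Ico₀ hL s
    exact ⟨y, ⟨hy.1, hy.2.le⟩, hy2 ▸ hs⟩
  obtain ⟨c, hc⟩ := core L hL f (deriv f) θ (deriv θ) hfd hθd hf' hθ' n hn hrot
    (by simpa using hfper 0) hfne2 heq hclosed
  have hall : ∀ s, ‖deriv (deriv γ) s‖ = |c| := by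
    intro s
    obtain ⟨y, hy, hy2⟩ := hγP.exists_mem_Ico₀ hL s
    rw [show ‖deriv (deriv γ) s‖ = ‖deriv (deriv γ) y‖ from hy2, hcurv, hc y ⟨hy.1, hy.2.le⟩]
  intro s₁ s₂
  rw [hall, hall]
end

section
/- Let γ : ℝ → ℝ³ be a simple closed spherical curve of length L, parametrized by arclength, with curvature κ(s) = ‖γ''(s)‖, and let A be the area (2-dimensional Hausdorff measure) of one of the two connected components of the complement of the image of γ in the unit sphere S². Then the first eigenvalue μ₁ of the two-dimensional periodic Schrödinger operator P_{A,L} = −(1 + A²/L²) ∂²/∂t² − 4 ∂²/∂s² − (4A/L) ∂²/∂t∂s + κ(s)² on [0, 2π] × [0, L] satisfies 4π²/L² ≤ μ₁; equivalently, for every smooth function f : ℝ² → ℝ that is 2π-periodic in t and L-periodic in s, ∫₀^{2π} ∫₀^L [ (1 + A²/L²) (∂f/∂t)² + 4 (∂f/∂s)² + (4A/L) (∂f/∂t)(∂f/∂s) + κ(s)² f² ] ds dt ≥ (4π²/L²) ∫₀^{2π} ∫₀^L f² ds dt. -/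
open Real MeasureTheory

/-- Wirtinger inequality with Dirichlet conditions. -/
lemma wirt_dirichlet (w w' : ℝ → ℝ) (a L : ℝ) (hL : 0 < L)
    (hw : ∀ s, HasDerivAt w (w' s) s) (hc : Continuous w')
    (h0 : w a = 0) (h1 : w (a + L) = 0) :
    (π / L) ^ 2 * ∫ s in a..(a + L), (w s) ^ 2 ≤ ∫ s in a..(a + L), (w' s) ^ 2 := by
  have hwc : Continuous w := continuous_iff_continuousAt.2 fun s => (hw s).continuousAt
  have key : ∀ μ : ℝ, 0 < μ → μ < π / L →
      μ ^ 2 * ∫ s in a..(a + L), (w s) ^ 2 ≤ ∫ s in a..(a + L), (w' s) ^ 2 := by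
    intro μ hμ hμL
    have hμL' : μ * L < π := (lt_div_iff₀ hL).1 hμL
    have hcos : ∀ s ∈ Set.uIcc a (a + L), 0 < cos (μ * (s - a - L / 2)) := by
      intro s hs
      rw [Set.uIcc_of_le (by linarith)] at hs
      apply cos_pos_of_mem_Ioo
      constructor
      · nlinarith [hs.1, mul_nonneg hμ.le (sub_nonneg.2 hs.1)]
      · nlinarith [hs.2, mul_nonneg hμ.le (sub_nonneg.2 hs.2)]
    set T : ℝ → ℝ := fun s => tan (μ * (s - a - L / 2)) with hT
    have hTd : ∀ s ∈ Set.uIcc a (a + L), HasDerivAt T ((1 + T s ^ 2) * μ) s := by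
      intro s hs
      have hne := (hcos s hs).ne'
      have h1 : HasDerivAt (fun s : ℝ => μ * (s - a - L / 2)) μ s := by
        simpa using (((hasDerivAt_id s).sub_const a).sub_const (L / 2)).const_mul μ
      have h2 := (Real.hasDerivAt_tan hne).comp s h1
      refine HasDerivAt.congr_deriv h2 ?_
      have : T s = sin (μ * (s - a - L / 2)) / cos (μ * (s - a - L / 2)) := by
        simp [hT, tan_eq_sin_div_cos]
      rw [this]
      generalize μ * (s - a - L / 2) = z at hne ⊢
      have := sin_sq_add_cos_sq z
      field_simp
      linarith
    have hTc : ContinuousOn T (Set.uIcc a (a + L)) :=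
      fun s hs => (hTd s hs).continuousAt.continuousWithinAt
    have hB : ∀ s ∈ Set.uIcc a (a + L), HasDerivAt (fun s => μ * T s * w s ^ 2)
        (μ ^ 2 * (1 + T s ^ 2) * w s ^ 2 + 2 * μ * T s * w s * w' s) s := by
      intro s hs
      refine HasDerivAt.congr_deriv (((hTd s hs).const_mul μ).mul ((hw s).pow 2)) ?_
      simp
      ring
    have hcont : ContinuousOn (fun s =>
        μ ^ 2 * (1 + T s ^ 2) * w s ^ 2 + 2 * μ * T s * w s * w' s) (Set.uIcc a (a + L)) := by
      fun_prop
    have hI := intervalIntegral.integral_eq_sub_of_hasDerivAt hB hcont.intervalIntegrable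
    simp only [h0, h1] at hI
    have hnn : 0 ≤ ∫ s in a..(a + L), (w' s + μ * T s * w s) ^ 2 :=
      intervalIntegral.integral_nonneg (by linarith) fun s _ => sq_nonneg _
    have heq : (∫ s in a..(a + L), (w' s + μ * T s * w s) ^ 2)
        = (∫ s in a..(a + L), (w' s) ^ 2) - μ ^ 2 * (∫ s in a..(a + L), (w s) ^ 2)
          + ∫ s in a..(a + L),
            (μ ^ 2 * (1 + T s ^ 2) * w s ^ 2 + 2 * μ * T s * w s * w' s) := by
      have i1 : IntervalIntegrable (fun s => (w' s) ^ 2) volume a (a + L) :=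
        (hc.pow 2).intervalIntegrable _ _
      have i2 : IntervalIntegrable (fun s => μ ^ 2 * (w s) ^ 2) volume a (a + L) :=
        (continuous_const.mul (hwc.pow 2)).intervalIntegrable _ _
      rw [← intervalIntegral.integral_const_mul, ← intervalIntegral.integral_sub i1 i2,
        ← intervalIntegral.integral_add (i1.sub i2) hcont.intervalIntegrable]
      congr 1
      ext s
      ring
    rw [heq, hI] at hnn
    linarith
  have hlim : Filter.Tendsto (fun μ : ℝ => μ ^ 2 * ∫ s in a..(a + L), (w s) ^ 2)
      (nhdsWithin (π / L) (Set.Iio (π / L)))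
      (nhds ((π / L) ^ 2 * ∫ s in a..(a + L), (w s) ^ 2)) := by
    have : Continuous (fun μ : ℝ => μ ^ 2 * ∫ s in a..(a + L), (w s) ^ 2) := by fun_prop
    exact (this.tendsto _).mono_left nhdsWithin_le_nhds
  refine le_of_tendsto hlim ?_
  have hpos : 0 < π / L := by positivity
  filter_upwards [Ioo_mem_nhdsLT hpos] with μ hμ
  exact key μ hμ.1 hμ.2

/-- Wirtinger inequality for antiperiodic functions. -/
lemma wirt_anti (w w' : ℝ → ℝ) (L : ℝ) (hL : 0 < L)
    (hw : ∀ s, HasDerivAt w (w' s) s) (hc : Continuous w')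
    (ha : ∀ s, w (s + L) = - w s) (ha' : ∀ s, w' (s + L) = - w' s) :
    (π / L) ^ 2 * ∫ s in (0:ℝ)..L, (w s) ^ 2 ≤ ∫ s in (0:ℝ)..L, (w' s) ^ 2 := by
  have hwc : Continuous w := continuous_iff_continuousAt.2 fun s => (hw s).continuousAt
  obtain ⟨a, h0⟩ : ∃ a, w a = 0 := by
    have := mem_range_of_exists_le_of_exists_ge hwc (c := 0)
    have h := ha 0
    rcases le_total (w 0) 0 with h' | h'
    · exact this ⟨0, h'⟩ ⟨0 + L, by linarith⟩
    · exact this ⟨0 + L, by linarith⟩ ⟨0, h'⟩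
  have p1 : Function.Periodic (fun s => (w s) ^ 2) L := fun s => by simp [ha]
  have p2 : Function.Periodic (fun s => (w' s) ^ 2) L := fun s => by simp [ha']
  have := wirt_dirichlet w w' a L hL hw hc h0 (by rw [ha, h0, neg_zero])
  rw [p1.intervalIntegral_add_eq a 0, p2.intervalIntegral_add_eq a 0] at this
  simpa using this

/-- The one-dimensional Schrödinger bound. -/
lemma schr_one (u u' k : ℝ → ℝ) (L : ℝ) (hL : 0 < L)
    (hu : ∀ s, HasDerivAt u (u' s) s) (huc : Continuous u')
    (hup : ∀ s, u (s + L) = u s) (hup' : ∀ s, u' (s + L) = u' s)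
    (hk : Continuous k) (hkp : ∀ s, k (s + L) = k s)
    (hK : 2 * π ≤ ∫ s in (0:ℝ)..L, k s) :
    (4 * π ^ 2 / L ^ 2) * ∫ s in (0:ℝ)..L, (u s) ^ 2 ≤
      ∫ s in (0:ℝ)..L, (4 * (u' s) ^ 2 + (k s) ^ 2 * (u s) ^ 2) := by
  have hcu : Continuous u := continuous_iff_continuousAt.2 fun s => (hu s).continuousAt
  set K := ∫ s in (0:ℝ)..L, k s with hKdef
  have hKpos : 0 < K := by have := pi_pos; linarith
  set c := π / K with hcdef
  have hc0 : 0 < c := by positivity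
  have hc1 : c ≤ 1 / 2 := by
    rw [hcdef, div_le_iff₀ hKpos]; linarith
  set φ : ℝ → ℝ := fun s => c * ∫ x in (0:ℝ)..s, k x with hφ
  have hφd : ∀ s, HasDerivAt φ (c * k s) s := fun s =>
    (intervalIntegral.integral_hasDerivAt_right (hk.intervalIntegrable _ _)
      (hk.stronglyMeasurableAtFilter _ _) hk.continuousAt).const_mul c
  have hφp : ∀ s, φ (s + L) = φ s + π := by
    intro s
    have h1 : (∫ x in (0:ℝ)..(s + L), k x) = (∫ x in (0:ℝ)..s, k x) + K := by
      rw [← intervalIntegral.integral_add_adjacent_intervals (hk.intervalIntegrable 0 s)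
        (hk.intervalIntegrable s (s + L))]
      have := Function.Periodic.intervalIntegral_add_eq (f := k) (T := L) hkp s 0
      rw [this, zero_add]
    simp only [hφ, h1, mul_add, hcdef]
    field_simp
  have hφc : Continuous φ := continuous_iff_continuousAt.2 fun s => (hφd s).continuousAt
  have d1 := wirt_anti (fun s => u s * cos (φ s))
    (fun s => u' s * cos (φ s) + u s * (- sin (φ s) * (c * k s))) L hL
    (fun s => (hu s).mul (hφd s).cos) (by fun_prop)
    (fun s => by simp [hφp, hup, cos_add_pi])
    (fun s => by simp [hφp, hup, hup', hkp, cos_add_pi, sin_add_pi]; ring)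
  have d2 := wirt_anti (fun s => u s * sin (φ s))
    (fun s => u' s * sin (φ s) + u s * (cos (φ s) * (c * k s))) L hL
    (fun s => (hu s).mul (hφd s).sin) (by fun_prop)
    (fun s => by simp [hφp, hup, sin_add_pi])
    (fun s => by simp [hφp, hup, hup', hkp, cos_add_pi, sin_add_pi]; ring)
  have d3 := add_le_add d1 d2
  rw [← mul_add, ← intervalIntegral.integral_add
      ((by fun_prop : Continuous _).intervalIntegrable _ _)
      ((by fun_prop : Continuous _).intervalIntegrable _ _),
    ← intervalIntegral.integral_add
      ((by fun_prop : Continuous _).intervalIntegrable _ _)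
      ((by fun_prop : Continuous _).intervalIntegrable _ _)] at d3
  have e1 : ∀ s, (u s * cos (φ s)) ^ 2 + (u s * sin (φ s)) ^ 2 = u s ^ 2 := fun s => by
    linear_combination (u s ^ 2) * sin_sq_add_cos_sq (φ s)
  have e2 : ∀ s, (u' s * cos (φ s) + u s * (- sin (φ s) * (c * k s))) ^ 2 +
      (u' s * sin (φ s) + u s * (cos (φ s) * (c * k s))) ^ 2
      = u' s ^ 2 + c ^ 2 * k s ^ 2 * u s ^ 2 := fun s => by
    linear_combination (u' s ^ 2 + c ^ 2 * k s ^ 2 * u s ^ 2) * sin_sq_add_cos_sq (φ s)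
  simp only [e1, e2] at d3
  calc (4 * π ^ 2 / L ^ 2) * ∫ s in (0:ℝ)..L, (u s) ^ 2
      = 4 * ((π / L) ^ 2 * ∫ s in (0:ℝ)..L, (u s) ^ 2) := by ring
    _ ≤ 4 * ∫ s in (0:ℝ)..L, (u' s ^ 2 + c ^ 2 * k s ^ 2 * u s ^ 2) := by linarith
    _ = ∫ s in (0:ℝ)..L, 4 * (u' s ^ 2 + c ^ 2 * k s ^ 2 * u s ^ 2) := by
        rw [intervalIntegral.integral_const_mul]
    _ ≤ _ := by
        apply intervalIntegral.integral_mono_on hL.le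
          ((by fun_prop : Continuous _).intervalIntegrable _ _)
          ((by fun_prop : Continuous _).intervalIntegrable _ _)
        intro s _
        have : 4 * c ^ 2 ≤ 1 := by nlinarith
        nlinarith [mul_le_mul_of_nonneg_right this (mul_nonneg (sq_nonneg (k s)) (sq_nonneg (u s)))]

section fenchel
variable {E : Type*} [NormedAddCommGroup E] [InnerProductSpace ℝ E]

/-- Spherical length bounds angle. -/
lemma arccos_le_length (T T' : ℝ → E) (hT : ∀ s, HasDerivAt T (T' s) s) (hc : Continuous T')
    (hn : ∀ s, ‖T s‖ = 1) (a b : ℝ) (hab : a ≤ b) :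
    arccos (inner ℝ (T a) (T b)) ≤ ∫ s in a..b, ‖T' s‖ := by
  have horth : ∀ s, inner ℝ (T s) (T' s) = 0 := by
    intro s
    have h1 : HasDerivAt (fun s => inner ℝ (T s) (T s)) (0:ℝ) s := by
      have : (fun s => inner ℝ (T s) (T s)) = fun _ => (1:ℝ) := by
        ext s; rw [real_inner_self_eq_norm_sq, hn]; norm_num
      rw [this]; exact hasDerivAt_const _ _
    have h2 := ((hT s).inner ℝ (hT s)).unique h1
    rw [real_inner_comm (T s) (T' s)] at h2
    linarith
  set p := T a with hp
  set g : ℝ → ℝ := fun s => inner ℝ p (T s) with hg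
  have hgd : ∀ s, HasDerivAt g (inner ℝ p (T' s)) s := fun s => by
    simpa using (hasDerivAt_const s p).inner ℝ (hT s)
  have hg1 : ∀ s, |g s| ≤ 1 := fun s => by
    have := abs_real_inner_le_norm p (T s)
    rwa [hp, hn, hn, mul_one] at this
  have hgb : ∀ s, |inner ℝ p (T' s)| ≤ ‖T' s‖ * √(1 - g s ^ 2) := by
    intro s
    have e1 : inner ℝ p (T' s) = inner ℝ (p - g s • T s) (T' s) := by
      rw [inner_sub_left, inner_smul_left, horth]; simp
    have e2 : ‖p - g s • T s‖ = √(1 - g s ^ 2) := by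
      have hsq : ‖p - g s • T s‖ ^ 2 = 1 - g s ^ 2 := by
        rw [norm_sub_sq_real, inner_smul_right, norm_smul, hn, hp, hn, Real.norm_eq_abs, mul_one,
          sq_abs]
        change 1 ^ 2 - 2 * (g s * g s) + g s ^ 2 = _
        ring
      rw [← hsq, Real.sqrt_sq (norm_nonneg _)]
    rw [e1]
    refine (abs_real_inner_le_norm _ _).trans ?_
    rw [e2, mul_comm]
  have key : ∀ μ : ℝ, 0 < μ → μ < 1 → arccos (μ * g b) ≤ arccos μ + ∫ s in a..b, ‖T' s‖ := by
    intro μ h0 h1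
    have hlt : ∀ s, |μ * g s| < 1 := fun s => by
      rw [abs_mul, abs_of_pos h0]; nlinarith [hg1 s, abs_nonneg (g s)]
    set D : ℝ → ℝ := fun s => (∫ x in a..s, ‖T' x‖) - arccos (μ * g s) with hD
    have hDd : ∀ s, HasDerivAt D (‖T' s‖ - (-(1 / √(1 - (μ * g s) ^ 2)) * (μ * inner ℝ p (T' s)))) s := by
      intro s
      have hl := abs_lt.1 (hlt s)
      have A1 := intervalIntegral.integral_hasDerivAt_right (hc.norm.intervalIntegrable a s)
        (hc.norm.stronglyMeasurableAtFilter _ _) hc.norm.continuousAt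
      have A2 := (Real.hasDerivAt_arccos hl.1.ne' hl.2.ne).comp s ((hgd s).const_mul μ)
      exact A1.sub A2
    have hmono : Monotone D := by
      apply monotone_of_deriv_nonneg (fun s => (hDd s).differentiableAt)
      intro s
      rw [(hDd s).deriv]
      have hl := abs_lt.1 (hlt s)
      have hpos : 0 < 1 - (μ * g s) ^ 2 := by nlinarith
      have hsq : 0 < √(1 - (μ * g s) ^ 2) := Real.sqrt_pos.2 hpos
      have hle : √(1 - g s ^ 2) * μ ≤ √(1 - (μ * g s) ^ 2) := by
        apply Real.le_sqrt_of_sq_le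
        have : g s ^ 2 ≤ 1 := by rw [← sq_abs]; nlinarith [hg1 s, abs_nonneg (g s)]
        rw [mul_pow, Real.sq_sqrt (by linarith)]
        nlinarith
      have h3 : - (μ * inner ℝ p (T' s)) ≤ ‖T' s‖ * √(1 - (μ * g s) ^ 2) := by
        have := (neg_abs_le (inner ℝ p (T' s)))
        have h4 := mul_le_mul_of_nonneg_left (hgb s) h0.le
        have h5 := mul_le_mul_of_nonneg_left hle (norm_nonneg (T' s))
        nlinarith
      have : - (μ * inner ℝ p (T' s)) / √(1 - (μ * g s) ^ 2) ≤ ‖T' s‖ := (div_le_iff₀ hsq).2 h3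
      have e : -(1 / √(1 - (μ * g s) ^ 2)) * (μ * inner ℝ p (T' s))
        = - (μ * inner ℝ p (T' s)) / √(1 - (μ * g s) ^ 2) := by ring
      rw [e]; linarith
    have := hmono hab
    have hga : g a = 1 := by
      simp only [hg, ← hp, real_inner_self_eq_norm_sq]; rw [hp, hn]; norm_num
    simp only [hD, hga, intervalIntegral.integral_same, mul_one] at this
    linarith
  have l1 : Filter.Tendsto (fun μ : ℝ => arccos (μ * g b)) (nhdsWithin 1 (Set.Iio 1))
      (nhds (arccos (g b))) := by
    have : Continuous (fun μ : ℝ => arccos (μ * g b)) := by fun_prop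
    simpa using (this.tendsto 1).mono_left nhdsWithin_le_nhds
  have l2 : Filter.Tendsto (fun μ : ℝ => arccos μ + ∫ s in a..b, ‖T' s‖) (nhdsWithin 1 (Set.Iio 1))
      (nhds (∫ s in a..b, ‖T' s‖)) := by
    have : Continuous (fun μ : ℝ => arccos μ + ∫ s in a..b, ‖T' s‖) := by fun_prop
    simpa using (this.tendsto 1).mono_left nhdsWithin_le_nhds
  refine le_of_tendsto_of_tendsto l1 l2 ?_
  filter_upwards [Ioo_mem_nhdsLT (zero_lt_one' ℝ)] with μ hμ
  exact key μ hμ.1 hμ.2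

lemma pi_le_of_cos_sum {x y : ℝ} (h : x + y ≤ 0) : π ≤ arccos x + arccos y := by
  have : arccos (-y) ≤ arccos x := Real.antitone_arccos (by linarith)
  rw [arccos_neg] at this
  linarith

/-- Fenchel. -/
lemma fenchel (γ T T' : ℝ → E) (L : ℝ) (hL : 0 < L) (hγ : ∀ s, HasDerivAt γ (T s) s)
    (hT : ∀ s, HasDerivAt T (T' s) s) (hc : Continuous T')
    (hn : ∀ s, ‖T s‖ = 1) (hγL : γ L = γ 0) (hTL : T L = T 0) :
    2 * π ≤ ∫ s in (0:ℝ)..L, ‖T' s‖ := by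
  have hTc : Continuous T := continuous_iff_continuousAt.2 fun s => (hT s).continuousAt
  have hi : ∀ a b, IntervalIntegrable (fun s => ‖T' s‖) volume a b :=
    fun a b => hc.norm.intervalIntegrable a b
  set K : ℝ → ℝ := fun s => ∫ x in (0:ℝ)..s, ‖T' x‖ with hK
  have hKc : Continuous K := intervalIntegral.continuous_primitive hi 0
  have hKab : ∀ a b, (∫ s in a..b, ‖T' s‖) = K b - K a := fun a b => by
    rw [hK]; simp only
    rw [intervalIntegral.integral_interval_sub_left (hi _ _) (hi _ _)]
  have hK0 : K 0 = 0 := by simp [hK]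
  have hKL : 0 ≤ K L := intervalIntegral.integral_nonneg hL.le fun s _ => norm_nonneg _
  obtain ⟨m, hm, hmK⟩ : ∃ m ∈ Set.Icc 0 L, K m = K L / 2 := by
    have := intermediate_value_Icc hL.le hKc.continuousOn
    exact this ⟨by rw [hK0]; linarith, by linarith⟩
  by_contra hlt
  push Not at hlt
  change K L < 2 * π at hlt
  have hlen : ∀ a b, a ≤ b → arccos (inner ℝ (T a) (T b)) ≤ K b - K a := fun a b hab => by
    rw [← hKab]; exact arccos_le_length T T' hT hc hn a b hab
  have hpos : ∀ s ∈ Set.Icc 0 L, 0 < inner ℝ (T s) (T 0 + T m) := by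
    intro s hs
    by_contra hneg
    push Not at hneg
    rw [inner_add_right] at hneg
    have := pi_le_of_cos_sum hneg
    rcases le_total s m with h | h
    · have h1 := hlen 0 s hs.1
      have h2 := hlen s m h
      rw [real_inner_comm] at h1
      linarith
    · have h1 := hlen m s h
      have h2 := hlen s L hs.2
      rw [real_inner_comm] at h1
      rw [hTL] at h2
      linarith
  have hcont : Continuous (fun s => inner ℝ (T s) (T 0 + T m)) := by fun_prop
  have h1 : 0 < ∫ s in (0:ℝ)..L, inner ℝ (T s) (T 0 + T m) :=
    intervalIntegral.intervalIntegral_pos_of_pos_on (hcont.intervalIntegrable _ _)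
      (fun s hs => hpos s ⟨hs.1.le, hs.2.le⟩) hL
  have h2 := intervalIntegral.integral_eq_sub_of_hasDerivAt (a := 0) (b := L)
    (f := fun s => inner ℝ (γ s) (T 0 + T m)) (f' := fun s => inner ℝ (T s) (T 0 + T m))
    (fun s _ => by simpa using (hγ s).inner ℝ (hasDerivAt_const s (T 0 + T m)))
    (hcont.intervalIntegrable _ _)
  rw [h2, hγL, sub_self] at h1
  exact lt_irrefl _ h1

end fenchel

lemma swap_cont (F : ℝ → ℝ → ℝ) (hF : Continuous (Function.uncurry F)) (a b c d : ℝ) :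
    ∫ x in a..b, ∫ y in c..d, F x y = ∫ y in c..d, ∫ x in a..b, F x y := by
  apply intervalIntegral_intervalIntegral_swap
  apply (hF.continuousOn.integrableOn_compact
    (isCompact_uIcc.prod isCompact_uIcc : IsCompact (Set.uIcc a b ×ˢ Set.uIcc c d))).mono_set
  exact Set.prod_mono Set.uIoc_subset_uIcc Set.uIoc_subset_uIcc

/-- **Theorem 2.** Let `γ` be a simple closed curve of length `L` on the unit sphere
`S² ⊂ ℝ³`, with curvature `κ(s) = ‖γ''(s)‖`, bounding a region of area `A` (the
2-dimensional Hausdorff measure of a connected component of the complement of the curve in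
the sphere). Then the first eigenvalue of the two-dimensional periodic Schrödinger operator
`P_{A,L} = -(1 + A²/L²) ∂²/∂t² - 4 ∂²/∂s² - (4A/L) ∂²/∂t∂s + κ(s)²` on `[0,2π] × [0,L]`
is at least `4π²/L²`: every smooth doubly periodic test function `f` satisfies the
Rayleigh-quotient inequality for the associated quadratic form. -/
theorem schroedinger_operator_lower_bound_hopf_torus
    (L : ℝ) (hL : 0 < L) (γ : ℝ → EuclideanSpace ℝ (Fin 3))
    (hγ : ContDiff ℝ (⊤ : ℕ∞) γ)
    (hper : ∀ s : ℝ, γ (s + L) = γ s)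
    (hunit : ∀ s : ℝ, ‖deriv γ s‖ = 1)
    (hsph : ∀ s : ℝ, ‖γ s‖ = 1)
    (hsimple : Set.InjOn γ (Set.Ico 0 L))
    (x : EuclideanSpace ℝ (Fin 3))
    (hx : x ∈ Metric.sphere (0 : EuclideanSpace ℝ (Fin 3)) 1 \ Set.range γ)
    (A : ℝ)
    (hA : A = (μH[2]
      (connectedComponentIn (Metric.sphere (0 : EuclideanSpace ℝ (Fin 3)) 1 \ Set.range γ) x)).toReal)
    (f : ℝ → ℝ → ℝ) (hf : ContDiff ℝ (⊤ : ℕ∞) (Function.uncurry f))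
    (hfpert : ∀ t s : ℝ, f (t + 2 * π) s = f t s)
    (hfpers : ∀ t s : ℝ, f t (s + L) = f t s) :
    (∫ t in (0:ℝ)..(2 * π), ∫ s in (0:ℝ)..L,
        ((1 + A^2 / L^2) * (deriv (fun t' => f t' s) t)^2
          + 4 * (deriv (fun s' => f t s') s)^2
          + (4 * A / L) * (deriv (fun t' => f t' s) t) * (deriv (fun s' => f t s') s)
          + ‖deriv (deriv γ) s‖^2 * (f t s)^2))
      ≥ (4 * π^2 / L^2) * ∫ t in (0:ℝ)..(2 * π), ∫ s in (0:ℝ)..L, (f t s)^2 := by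
  set D1 : ℝ → ℝ → ℝ := fun t s => deriv (fun t' => f t' s) t with hD1
  set D2 : ℝ → ℝ → ℝ := fun t s => deriv (fun s' => f t s') s with hD2
  have hfd : Differentiable ℝ (Function.uncurry f) := hf.differentiable (by simp)
  have hfc : Continuous (Function.uncurry f) := hf.continuous
  have h1 : ∀ t s, HasDerivAt (fun t' => f t' s) (fderiv ℝ (Function.uncurry f) (t, s) (1, 0)) t := by
    intro t s
    have := (hfd (t, s)).hasFDerivAt.comp_hasDerivAt t
      ((hasDerivAt_id t).prodMk (hasDerivAt_const t s))
    exact this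
  have h2 : ∀ t s, HasDerivAt (fun s' => f t s') (fderiv ℝ (Function.uncurry f) (t, s) (0, 1)) s := by
    intro t s
    have := (hfd (t, s)).hasFDerivAt.comp_hasDerivAt s
      ((hasDerivAt_const s t).prodMk (hasDerivAt_id s))
    exact this
  have h1' : ∀ t s, HasDerivAt (fun t' => f t' s) (D1 t s) t := fun t s =>
    (h1 t s).differentiableAt.hasDerivAt
  have h2' : ∀ t s, HasDerivAt (fun s' => f t s') (D2 t s) s := fun t s =>
    (h2 t s).differentiableAt.hasDerivAt
  have hfdc : Continuous (fderiv ℝ (Function.uncurry f)) := hf.continuous_fderiv (by simp)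
  have c1 : Continuous (Function.uncurry D1) := by
    have : Function.uncurry D1 = fun p => fderiv ℝ (Function.uncurry f) p (1, 0) := by
      ext ⟨t, s⟩; exact (h1 t s).deriv
    rw [this]; fun_prop
  have c2 : Continuous (Function.uncurry D2) := by
    have : Function.uncurry D2 = fun p => fderiv ℝ (Function.uncurry f) p (0, 1) := by
      ext ⟨t, s⟩; exact (h2 t s).deriv
    rw [this]; fun_prop
  have D2per : ∀ t s, D2 t (s + L) = D2 t s := by
    intro t s
    have e : (fun s' => f t s') = fun s' => f t (s' + L) := by ext s'; rw [hfpers]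
    change deriv (fun s' => f t s') (s + L) = deriv (fun s' => f t s') s
    conv_rhs => rw [e]
    rw [deriv_comp_add_const (fun s' => f t s')]
  have cc : ∀ {g : ℝ → ℝ → ℝ}, Continuous (Function.uncurry g) →
      ∀ {X : Type} [TopologicalSpace X] {p q : X → ℝ}, Continuous p → Continuous q →
      Continuous (fun x => g (p x) (q x)) := fun hg _ _ _ _ hp hq => hg.comp (hp.prodMk hq)
  have hγ2 : ContDiff ℝ (⊤ : ℕ∞) (deriv γ) := (contDiff_infty_iff_deriv.1 hγ).2
  have hγ3 : ContDiff ℝ (⊤ : ℕ∞) (deriv (deriv γ)) := (contDiff_infty_iff_deriv.1 hγ2).2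
  have perD : ∀ g : ℝ → EuclideanSpace ℝ (Fin 3), (∀ s, g (s + L) = g s) →
      ∀ s, deriv g (s + L) = deriv g s := by
    intro g hg s
    have e : g = fun s' => g (s' + L) := by ext1 s'; rw [hg]
    conv_rhs => rw [e]
    rw [deriv_comp_add_const g]
  have hTper := perD γ hper
  have hKper := perD _ hTper
  have hkc : Continuous (fun s => ‖deriv (deriv γ) s‖) := hγ3.continuous.norm
  have hF : 2 * π ≤ ∫ s in (0:ℝ)..L, ‖deriv (deriv γ) s‖ := by
    refine fenchel γ (deriv γ) (deriv (deriv γ)) L hL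
      (fun s => (hγ.differentiable (by simp) s).hasDerivAt)
      (fun s => (hγ2.differentiable (by simp) s).hasDerivAt) hγ3.continuous hunit ?_ ?_
    · simpa using hper 0
    · simpa using hTper 0
  set k : ℝ → ℝ := fun s => ‖deriv (deriv γ) s‖ with hk
  have hkp : ∀ s, k (s + L) = k s := fun s => by simp only [hk]; rw [hKper]
  change (4 * π^2 / L^2) * (∫ t in (0:ℝ)..(2 * π), ∫ s in (0:ℝ)..L, (f t s)^2) ≤
    ∫ t in (0:ℝ)..(2 * π), ∫ s in (0:ℝ)..L, ((1 + A^2 / L^2) * (D1 t s)^2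
          + 4 * (D2 t s)^2 + (4 * A / L) * (D1 t s) * (D2 t s) + (k s)^2 * (f t s)^2)
  clear_value k D1 D2
  set c : ℝ := A / (2 * L) with hc
  set h : ℝ → ℝ → ℝ := fun t s => D2 t s + c * D1 t s with hh
  have ch : Continuous (Function.uncurry h) := by
    have : Function.uncurry h = fun p => Function.uncurry D2 p + c * Function.uncurry D1 p := by
      ext ⟨t, s⟩; rfl
    rw [this]; fun_prop
  set G : ℝ → ℝ := fun s => ∫ t in (0:ℝ)..(2 * π), f t s ^ 2 with hG
  set Q : ℝ → ℝ := fun s => ∫ t in (0:ℝ)..(2 * π), f t s * h t s with hQ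
  set H : ℝ → ℝ := fun s => ∫ t in (0:ℝ)..(2 * π), h t s ^ 2 with hH
  have par : ∀ g : ℝ → ℝ → ℝ, Continuous (Function.uncurry g) →
      Continuous (fun s => ∫ t in (0:ℝ)..(2 * π), g t s) := fun g hg =>
    intervalIntegral.continuous_parametric_intervalIntegral_of_continuous'
      (f := fun s t => g t s) (hg.comp continuous_swap) 0 (2 * π)
  have cff : Continuous (Function.uncurry fun t s => f t s ^ 2) := hfc.pow 2
  have cfh : Continuous (Function.uncurry fun t s => f t s * h t s) := hfc.mul ch
  have chh : Continuous (Function.uncurry fun t s => h t s ^ 2) := ch.pow 2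
  have cG : Continuous G := par _ cff
  have cQ : Continuous Q := par _ cfh
  have cH : Continuous H := par _ chh
  have cf2 : Continuous (Function.uncurry fun t s => 2 * f t s * D2 t s) :=
    (continuous_const.mul hfc).mul c2
  have slice : ∀ g : ℝ → ℝ → ℝ, Continuous (Function.uncurry g) → ∀ s a b,
      IntervalIntegrable (fun t => g t s) volume a b := fun g hg s a b =>
    (cc hg continuous_id continuous_const).intervalIntegrable a b
  have slice2 : ∀ g : ℝ → ℝ → ℝ, Continuous (Function.uncurry g) → ∀ t a b,
      IntervalIntegrable (fun s => g t s) volume a b := fun g hg t a b =>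
    (cc hg continuous_const continuous_id).intervalIntegrable a b
  have cf1 : Continuous (Function.uncurry fun t s => 2 * f t s * D1 t s) :=
    (continuous_const.mul hfc).mul c1
  have hQ2 : ∀ s, (∫ t in (0:ℝ)..(2 * π), 2 * f t s * D2 t s) = 2 * Q s := by
    intro s
    have hz : (∫ t in (0:ℝ)..(2 * π), 2 * f t s * D1 t s) = 0 := by
      rw [intervalIntegral.integral_eq_sub_of_hasDerivAt (f := fun t => f t s ^ 2)]
      · have := hfpert 0 s
        rw [zero_add] at this
        simp [this]
      · intro t _
        exact ((h1' t s).pow 2).congr_deriv (by simp)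
      · exact slice _ cf1 s _ _
    have e : 2 * Q s = (∫ t in (0:ℝ)..(2 * π), 2 * f t s * D2 t s)
        + c * ∫ t in (0:ℝ)..(2 * π), 2 * f t s * D1 t s := by
      rw [hQ]
      simp only
      rw [← intervalIntegral.integral_const_mul, ← intervalIntegral.integral_const_mul,
        ← intervalIntegral.integral_add (slice _ cf2 s _ _)
          ((slice _ cf1 s _ _).const_mul c)]
      congr 1; ext t; simp only [hh]; ring
    rw [e, hz]; ring
  have hGd : ∀ s, HasDerivAt G (2 * Q s) s := by
    have e : G = fun s => G 0 + ∫ r in (0:ℝ)..s, 2 * Q r := by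
      ext s
      have : G s - G 0 = ∫ r in (0:ℝ)..s, 2 * Q r := by
        simp only [← hQ2]
        rw [← swap_cont (fun t s => 2 * f t s * D2 t s) cf2, hG]
        simp only
        rw [← intervalIntegral.integral_sub (slice _ cff s _ _) (slice _ cff 0 _ _)]
        congr 1; ext t
        rw [intervalIntegral.integral_eq_sub_of_hasDerivAt (f := fun s => f t s ^ 2)]
        · intro r _
          exact ((h2' t r).pow 2).congr_deriv (by simp)
        · exact slice2 _ cf2 t _ _
      linarith
    intro s
    rw [e]
    have c' : Continuous (fun r => 2 * Q r) := by fun_prop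
    exact (intervalIntegral.integral_hasDerivAt_right (c'.intervalIntegrable _ _)
      (c'.stronglyMeasurableAtFilter _ _) c'.continuousAt).const_add _
  have hG0 : ∀ s, 0 ≤ G s := fun s =>
    intervalIntegral.integral_nonneg (by positivity) fun t _ => sq_nonneg _
  have hCS : ∀ s r, 0 ≤ H s - 2 * r * Q s + r ^ 2 * G s := by
    intro s r
    have e : H s - 2 * r * Q s + r ^ 2 * G s = ∫ t in (0:ℝ)..(2 * π), (h t s - r * f t s) ^ 2 := by
      simp only [hG, hQ, hH]
      rw [← intervalIntegral.integral_const_mul, ← intervalIntegral.integral_const_mul,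
        ← intervalIntegral.integral_sub (slice _ chh s _ _) ((slice _ cfh s _ _).const_mul _),
        ← intervalIntegral.integral_add ((slice _ chh s _ _).sub ((slice _ cfh s _ _).const_mul _))
          ((slice _ cff s _ _).const_mul _)]
      congr 1; ext t; ring
    rw [e]
    exact intervalIntegral.integral_nonneg (by positivity) fun t _ => sq_nonneg _
  have hGp : ∀ s, G (s + L) = G s := fun s => by simp only [hG, hfpers]
  have hQp : ∀ s, Q (s + L) = Q s := fun s => by
    have a := hQ2 (s + L)
    simp only [hfpers, D2per] at a
    linarith [hQ2 s]
  have heps : ∀ ε : ℝ, 0 < ε → (4 * π ^ 2 / L ^ 2) * ∫ s in (0:ℝ)..L, (G s + ε) ≤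
      ∫ s in (0:ℝ)..L, (4 * H s + k s ^ 2 * (G s + ε)) := by
    intro ε hε
    have hp : ∀ s, 0 < G s + ε := fun s => by linarith [hG0 s]
    have hsp : ∀ s, 0 < √(G s + ε) := fun s => Real.sqrt_pos.2 (hp s)
    have hsq : ∀ s, √(G s + ε) ^ 2 = G s + ε := fun s => Real.sq_sqrt (hp s).le
    have cD : Continuous (fun s => Q s / √(G s + ε)) :=
      cQ.div (by fun_prop) fun s => (hsp s).ne'
    have := schr_one (fun s => √(G s + ε)) (fun s => Q s / √(G s + ε)) k L hL
      (fun s => (((hGd s).add_const ε).sqrt (hp s).ne').congr_deriv (by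
        have := (hsp s).ne'
        field_simp))
      cD (fun s => by simp only [hGp]) (fun s => by simp only [hGp, hQp]) hkc hkp hF
    simp only [hsq] at this
    refine this.trans (intervalIntegral.integral_mono_on hL.le
      (Continuous.intervalIntegrable (by fun_prop) _ _)
      (Continuous.intervalIntegrable (by fun_prop) _ _) ?_)
    intro s _
    have hr := hCS s (Q s / (G s + ε))
    have hne := (hp s).ne'
    have e1 : (Q s / √(G s + ε)) ^ 2 = (Q s / (G s + ε)) ^ 2 * (G s + ε) := by
      rw [div_pow, hsq]; field_simp
    have e2 : Q s = (Q s / (G s + ε)) * (G s + ε) := by field_simp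
    rw [e1]
    set r := Q s / (G s + ε)
    rw [e2] at hr
    nlinarith [mul_nonneg (sq_nonneg r) hε.le]
  have hlim : (4 * π ^ 2 / L ^ 2) * ∫ s in (0:ℝ)..L, G s ≤
      ∫ s in (0:ℝ)..L, (4 * H s + k s ^ 2 * G s) := by
    set B := ∫ s in (0:ℝ)..L, k s ^ 2 with hB
    have e : ∀ ε : ℝ, (∫ s in (0:ℝ)..L, (4 * H s + k s ^ 2 * (G s + ε)))
        = (∫ s in (0:ℝ)..L, (4 * H s + k s ^ 2 * G s)) + ε * B := by
      intro ε
      rw [hB, ← intervalIntegral.integral_const_mul, ← intervalIntegral.integral_add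
        (Continuous.intervalIntegrable (by fun_prop) _ _)
        (Continuous.intervalIntegrable (by fun_prop) _ _)]
      congr 1; ext s; ring
    have hle : ∀ ε : ℝ, 0 < ε → (4 * π ^ 2 / L ^ 2) * ∫ s in (0:ℝ)..L, G s ≤
        (∫ s in (0:ℝ)..L, (4 * H s + k s ^ 2 * G s)) + ε * B := by
      intro ε hε
      rw [← e]
      refine le_trans ?_ (heps ε hε)
      apply mul_le_mul_of_nonneg_left _ (by positivity)
      exact intervalIntegral.integral_mono_on hL.le
        (Continuous.intervalIntegrable (by fun_prop) _ _)
        (Continuous.intervalIntegrable (by fun_prop) _ _) fun s _ => by linarith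
    have ht : Filter.Tendsto (fun ε : ℝ => (∫ s in (0:ℝ)..L, (4 * H s + k s ^ 2 * G s)) + ε * B)
        (nhdsWithin 0 (Set.Ioi 0)) (nhds (∫ s in (0:ℝ)..L, (4 * H s + k s ^ 2 * G s))) := by
      have : Continuous (fun ε : ℝ => (∫ s in (0:ℝ)..L, (4 * H s + k s ^ 2 * G s)) + ε * B) := by
        fun_prop
      simpa using (this.tendsto 0).mono_left nhdsWithin_le_nhds
    exact ge_of_tendsto ht (by filter_upwards [self_mem_nhdsWithin] with ε hε using hle ε hε)
  have ck2 : Continuous (Function.uncurry fun (_ : ℝ) s => k s ^ 2) :=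
    (hkc.comp continuous_snd).pow 2
  have cI : Continuous (Function.uncurry fun t s => 4 * h t s ^ 2 + k s ^ 2 * f t s ^ 2) :=
    (continuous_const.mul chh).add (ck2.mul cff)
  have cJ : Continuous (Function.uncurry fun t s => (1 + A^2 / L^2) * (D1 t s)^2
          + 4 * (D2 t s)^2 + (4 * A / L) * (D1 t s) * (D2 t s) + (k s)^2 * (f t s)^2) :=
    (((continuous_const.mul (c1.pow 2)).add (continuous_const.mul (c2.pow 2))).add
      ((continuous_const.mul c1).mul c2)).add (ck2.mul cff)
  have par2 : ∀ g : ℝ → ℝ → ℝ, Continuous (Function.uncurry g) →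
      Continuous (fun t => ∫ s in (0:ℝ)..L, g t s) := fun g hg =>
    intervalIntegral.continuous_parametric_intervalIntegral_of_continuous' hg 0 L
  have e1 : (∫ t in (0:ℝ)..(2 * π), ∫ s in (0:ℝ)..L, (f t s)^2) = ∫ s in (0:ℝ)..L, G s :=
    swap_cont _ cff _ _ _ _
  have e2 : (∫ s in (0:ℝ)..L, (4 * H s + k s ^ 2 * G s)) =
      ∫ t in (0:ℝ)..(2 * π), ∫ s in (0:ℝ)..L, (4 * h t s ^ 2 + k s ^ 2 * f t s ^ 2) := by
    rw [swap_cont (fun t s => 4 * h t s ^ 2 + k s ^ 2 * f t s ^ 2) cI]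
    congr 1; ext s
    rw [intervalIntegral.integral_add ((slice _ chh s _ _).const_mul 4)
      ((slice _ cff s _ _).const_mul (k s ^ 2)), intervalIntegral.integral_const_mul,
      intervalIntegral.integral_const_mul]
  rw [e1]
  refine hlim.trans ?_
  rw [e2]
  apply intervalIntegral.integral_mono_on (by positivity)
    ((par2 _ cI).intervalIntegrable _ _) ((par2 _ cJ).intervalIntegrable _ _)
  intro t _
  apply intervalIntegral.integral_mono_on hL.le (slice2 _ cI t _ _) (slice2 _ cJ t _ _)
  intro s _
  have e3 : (1 + A^2 / L^2) * (D1 t s)^2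
          + 4 * (D2 t s)^2 + (4 * A / L) * (D1 t s) * (D2 t s) + (k s)^2 * (f t s)^2
      = D1 t s ^ 2 + (4 * h t s ^ 2 + k s ^ 2 * f t s ^ 2) := by
    simp only [hh, hc]
    field_simp
    ring
  rw [e3]
  linarith [sq_nonneg (D1 t s)]
end
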